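/- arXiv:2603.18929 — 2 statements merged into one kernel-verified Lean document; each statement's English description precedes it below -/
import Mathlib

section
/- There exists an absolute constant c ≥ 1 (independent of the dimension and of the bodies) such that for every dimension d ≥ 2, every pair of centrally symmetric convex bodies C, D ⊆ ℝ^d and every α > 0, one has c^{−d} · N_{C°}(D°, α) ≤ N_D(C, α) ≤ c^{d} · N_{C°}(D°, α), where N_D(U,α) is the translative covering number of U by translates of α·D. -/
open Set MeasureTheory Metric
open scoped Pointwise RealInnerProductSpace ENNReal

noncomputable section

abbrev Euc (d : ℕ) := EuclideanSpace ℝ (Fin d)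

/-- A convex body: a compact convex set with nonempty interior. -/
def IsConvexBody {d : ℕ} (K : Set (Euc d)) : Prop :=
  IsCompact K ∧ Convex ℝ K ∧ (interior K).Nonempty

/-- The polar of a set. -/
def polarSet {d : ℕ} (S : Set (Euc d)) : Set (Euc d) :=
  {y | ∀ x ∈ S, ⟪x, y⟫ ≤ 1}

/-- The Hilbert distance with respect to the body `K`. -/
def hilbertDist {d : ℕ} (K : Set (Euc d)) (x y : Euc d) : ℝ :=
  -(1 / 2) * Real.log ((1 - gauge ((fun k => k - x) '' K) (y - x)) *
    (1 - gauge ((fun k => k - y) '' K) (x - y)))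

/-- The Hilbert ball of radius `r` centered at `x`. -/
def hilbertBall {d : ℕ} (K : Set (Euc d)) (x : Euc d) (r : ℝ) : Set (Euc d) :=
  {y ∈ interior K | hilbertDist K x y ≤ r}

/-- The Hilbert covering number of `U` at scale `α` in the geometry induced by `K`. -/
def hilbertCov {d : ℕ} (K U : Set (Euc d)) (α : ℝ) : ℕ :=
  sInf {m : ℕ | ∃ x : Fin m → Euc d, (∀ i, x i ∈ interior K) ∧
    U ⊆ ⋃ i, hilbertBall K (x i) α}

/-- The translative covering number of `U` by translates of `α • D`. -/
def transCov {d : ℕ} (D U : Set (Euc d)) (α : ℝ) : ℕ :=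
  sInf {m : ℕ | ∃ x : Fin m → Euc d, U ⊆ ⋃ i, x i +ᵥ α • D}

/-- The Hilbert `α`-expansion of `G` in `K`. -/
def hilbertExpand {d : ℕ} (K G : Set (Euc d)) (α : ℝ) : Set (Euc d) :=
  {x ∈ interior K | sInf (hilbertDist K x '' G) ≤ α}

/-- The Lebesgue volume of the Euclidean unit ball in `ℝ^d`. -/
def ωd (d : ℕ) : ℝ := (volume (ball (0 : Euc d) 1)).toReal

/-- The Hilbert Finsler unit ball at `y` in the geometry induced by `K`. -/
def finslerBall {d : ℕ} (K : Set (Euc d)) (y : Euc d) : Set (Euc d) :=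
  {v | gauge ((fun k => k - y) '' K) v + gauge ((fun k => k - y) '' K) (-v) ≤ 2}

/-- The Hilbert Holmes–Thompson volume of `U` in the geometry induced by `K`. -/
def volH {d : ℕ} (K U : Set (Euc d)) : ℝ :=
  (1 / ωd d) * ∫ y in U, (volume (polarSet (finslerBall K y))).toReal

/-- The recentered Macbeath region `A(x) := (K ∩ (2x − K)) − x`. -/
def macbeathA {d : ℕ} (K : Set (Euc d)) (x : Euc d) : Set (Euc d) :=
  (fun k => k - x) '' (K ∩ ((fun k => (2 : ℝ) • x - k) '' K))


section P1
set_option linter.unusedSectionVars false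
variable {ι : Type*} [Fintype ι] [DecidableEq ι]

/-- Jacobian matrix of `T`. -/
def jac (T : EuclideanSpace ℝ ι → EuclideanSpace ℝ ι) (z : EuclideanSpace ℝ ι) : Matrix ι ι ℝ :=
  fun i j => (fderiv ℝ T z (EuclideanSpace.single j 1)) i

lemma jac_eq_toMatrix (T : EuclideanSpace ℝ ι → EuclideanSpace ℝ ι) (z : EuclideanSpace ℝ ι) :
    jac T z = LinearMap.toMatrix (EuclideanSpace.basisFun ι ℝ).toBasis
      (EuclideanSpace.basisFun ι ℝ).toBasis (fderiv ℝ T z : EuclideanSpace ℝ ι →ₗ[ℝ] EuclideanSpace ℝ ι) := by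
  ext i j
  simp [jac, LinearMap.toMatrix_apply]

lemma det_one_add_jac (T : EuclideanSpace ℝ ι → EuclideanSpace ℝ ι) (z : EuclideanSpace ℝ ι) (s : ℝ) :
    (ContinuousLinearMap.id ℝ (EuclideanSpace ℝ ι) + s • fderiv ℝ T z).det
      = (1 + s • jac T z).det := by
  rw [jac_eq_toMatrix, ContinuousLinearMap.det,
    ← LinearMap.det_toMatrix (EuclideanSpace.basisFun ι ℝ).toBasis]
  congr 1
  rw [ContinuousLinearMap.toLinearMap_add, ContinuousLinearMap.toLinearMap_smul, map_add, map_smul]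
  congr 1
  exact LinearMap.toMatrix_id _

lemma jac_bound {T : EuclideanSpace ℝ ι → EuclideanSpace ℝ ι} {k : NNReal} (hT : LipschitzWith k T)
    (z : EuclideanSpace ℝ ι) (i j : ι) : |jac T z i j| ≤ k := by
  have h1 : ‖fderiv ℝ T z‖ ≤ k := norm_fderiv_le_of_lipschitz ℝ hT
  have h2 := (fderiv ℝ T z).le_of_opNorm_le h1 (EuclideanSpace.single j 1)
  have h3 := PiLp.norm_apply_le (fderiv ℝ T z (EuclideanSpace.single j 1)) i
  simp at h2
  exact h3.trans h2

lemma measurable_jac (T : EuclideanSpace ℝ ι → EuclideanSpace ℝ ι) (i j : ι) :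
    Measurable (fun z => jac T z i j) := by
  have := measurable_fderiv_apply_const ℝ T (EuclideanSpace.single j (1:ℝ))
  unfold jac
  fun_prop

/-- complex integrand -/
def FF (b : ℝ) (T : EuclideanSpace ℝ ι → EuclideanSpace ℝ ι) (s : ℂ) (z : EuclideanSpace ℝ ι) : ℂ :=
  Complex.exp (-b * ∑ j, ((z j : ℂ) + s * (T z j : ℂ)) ^ 2) *
    ((1 : Matrix ι ι ℂ) + s • (jac T z).map Complex.ofReal).det

lemma FF_measurable (b : ℝ) {T : EuclideanSpace ℝ ι → EuclideanSpace ℝ ι} (hT : Continuous T) (s : ℂ) :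
    Measurable (FF b T s) := by
  unfold FF
  have := fun i j => measurable_jac T i j
  have h2 := hT.measurable
  simp only [Matrix.det_apply]
  simp only [Matrix.add_apply, Matrix.smul_apply, Matrix.map_apply]
  fun_prop

lemma FF_differentiable (b : ℝ) (T : EuclideanSpace ℝ ι → EuclideanSpace ℝ ι) (z : EuclideanSpace ℝ ι) :
    Differentiable ℂ (fun s => FF b T s z) := by
  unfold FF
  simp only [Matrix.det_apply]
  simp only [Matrix.add_apply, Matrix.smul_apply, Matrix.map_apply]
  fun_prop

lemma FF_re (T : EuclideanSpace ℝ ι → EuclideanSpace ℝ ι) (s : ℂ) (z : EuclideanSpace ℝ ι) :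
    (∑ j, ((z j : ℂ) + s * (T z j : ℂ)) ^ 2).re =
      ‖z‖ ^ 2 + 2 * s.re * ⟪z, T z⟫ + (s.re ^ 2 - s.im ^ 2) * ‖T z‖ ^ 2 := by
  rw [EuclideanSpace.norm_sq_eq, EuclideanSpace.norm_sq_eq, PiLp.inner_apply]
  simp only [Complex.re_sum, Finset.mul_sum, ← Finset.sum_add_distrib]
  refine Finset.sum_congr rfl fun j _ => ?_
  simp [sq]
  ring

lemma FF_re_lower {T : EuclideanSpace ℝ ι → EuclideanSpace ℝ ι} {k : NNReal} (hT : LipschitzWith k T)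
    (h0 : T 0 = 0) {s : ℂ} {δ : ℝ} (hδ : 0 ≤ δ) (h : (|s.re| + |s.im|) * k ≤ 1 - δ) (z : EuclideanSpace ℝ ι) :
    δ ^ 2 * ‖z‖ ^ 2 ≤ (∑ j, ((z j : ℂ) + s * (T z j : ℂ)) ^ 2).re := by
  rw [FF_re]
  have h1 : ‖T z‖ ≤ k * ‖z‖ := by simpa [h0] using hT.dist_le_mul z 0
  have h2 := abs_real_inner_le_norm z (T z)
  have h3 : - (|s.re| * (‖z‖ * ‖T z‖)) ≤ s.re * ⟪z, T z⟫ := by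
    have : |s.re * ⟪z, T z⟫| ≤ |s.re| * (‖z‖ * ‖T z‖) := by rw [abs_mul]; gcongr
    exact (abs_le.1 this).1
  have h4 := norm_nonneg z
  have h5 := norm_nonneg (T z)
  have hσ := abs_nonneg s.re
  have hτ := abs_nonneg s.im
  rw [← sq_abs s.re, ← sq_abs s.im]
  set σ := |s.re|
  set τ := |s.im|
  have h6 : (σ + τ) * ‖T z‖ ≤ (1 - δ) * ‖z‖ := by
    calc (σ + τ) * ‖T z‖ ≤ (σ + τ) * (k * ‖z‖) := by gcongr
      _ = ((σ + τ) * k) * ‖z‖ := by ring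
      _ ≤ _ := by gcongr
  have h7 : δ * ‖z‖ ≤ ‖z‖ - σ * ‖T z‖ - τ * ‖T z‖ := by nlinarith
  have h8 : 0 ≤ τ * ‖T z‖ := by positivity
  have h9 : 0 ≤ δ * ‖z‖ := by positivity
  nlinarith

lemma det_bound {T : EuclideanSpace ℝ ι → EuclideanSpace ℝ ι} {k : NNReal} (hT : LipschitzWith k T)
    {s : ℂ} {B : ℝ} (hs : ‖s‖ ≤ B) (z : EuclideanSpace ℝ ι) :
    ‖((1 : Matrix ι ι ℂ) + s • (jac T z).map Complex.ofReal).det‖ ≤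
      (Fintype.card ι).factorial * (1 + B * k) ^ Fintype.card ι := by
  have := Matrix.det_le (A := (1 : Matrix ι ι ℂ) + s • (jac T z).map Complex.ofReal)
    (abv := IsAbsoluteValue.toAbsoluteValue (norm : ℂ → ℝ)) (x := 1 + B * k) ?_
  · simpa using this
  · intro i j
    simp only [IsAbsoluteValue.toAbsoluteValue_apply, Matrix.add_apply, Matrix.smul_apply, Matrix.map_apply]
    refine (norm_add_le _ _).trans ?_
    gcongr
    · by_cases h : i = j <;> simp [Matrix.one_apply, h]
    · simp only [smul_eq_mul, norm_mul]
      have := jac_bound hT z i j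
      have h0 := norm_nonneg s
      have h1 : ‖((jac T z i j : ℝ) : ℂ)‖ ≤ k := by simpa using this
      exact mul_le_mul hs h1 (norm_nonneg _) (h0.trans hs)

lemma FF_bound {T : EuclideanSpace ℝ ι → EuclideanSpace ℝ ι} {k : NNReal} (hT : LipschitzWith k T)
    (h0 : T 0 = 0) {b : ℝ} (hb : 0 < b) {s : ℂ} {δ B : ℝ} (hδ : 0 ≤ δ)
    (h : (|s.re| + |s.im|) * k ≤ 1 - δ) (hs : ‖s‖ ≤ B) (z : EuclideanSpace ℝ ι) :
    ‖FF b T s z‖ ≤ ((Fintype.card ι).factorial * (1 + B * k) ^ Fintype.card ι) *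
      Real.exp (- (b * δ ^ 2) * ‖z‖ ^ 2) := by
  unfold FF
  rw [norm_mul, mul_comm, Complex.norm_exp]
  have h1 := det_bound hT hs z
  have h2 := FF_re_lower hT h0 hδ h z
  refine mul_le_mul h1 ?_ (Real.exp_pos _).le ((norm_nonneg _).trans h1)
  gcongr
  have : (-(b:ℂ) * ∑ j, ((z j : ℂ) + s * (T z j : ℂ)) ^ 2).re =
    - (b * (∑ j, ((z j : ℂ) + s * (T z j : ℂ)) ^ 2).re) := by
    rw [← Complex.ofReal_neg, Complex.re_ofReal_mul]; ring
  rw [this]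
  nlinarith

lemma gauss_integrable {b : ℝ} (hb : 0 < b) :
    Integrable (fun z : EuclideanSpace ℝ ι => Real.exp (- b * ‖z‖ ^ 2)) := by
  have := (GaussianFourier.integrable_cexp_neg_mul_sq_norm_add (V := EuclideanSpace ℝ ι) (b := (b:ℂ))
    (by simpa using hb) 0 0).norm
  refine this.congr (Filter.Eventually.of_forall fun z => ?_)
  simp only [Complex.norm_exp]
  congr 1
  simp
  left
  norm_cast
end P1

section P1b
variable {ι : Type*} [Fintype ι] [DecidableEq ι]
set_option linter.unusedSectionVars false

lemma FF_integrable {T : EuclideanSpace ℝ ι → EuclideanSpace ℝ ι} {k : NNReal} (hT : LipschitzWith k T)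
    (h0 : T 0 = 0) {b : ℝ} (hb : 0 < b) {s : ℂ} {δ : ℝ} (hδ : 0 < δ)
    (h : (|s.re| + |s.im|) * k ≤ 1 - δ) : Integrable (FF b T s) := by
  refine Integrable.mono' ((gauss_integrable (b := b * δ ^ 2) (by positivity)).const_mul
    ((Fintype.card ι).factorial * (1 + ‖s‖ * k) ^ Fintype.card ι))
    (FF_measurable b hT.continuous s).aestronglyMeasurable ?_
  exact Filter.Eventually.of_forall fun z => FF_bound hT h0 hb hδ.le h le_rfl z

lemma FF_hasDeriv {T : EuclideanSpace ℝ ι → EuclideanSpace ℝ ι} {k : NNReal} (hT : LipschitzWith k T)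
    (h0 : T 0 = 0) {b : ℝ} (hb : 0 < b) {δ r : ℝ} (hδ : 0 < δ) (hr : 0 < r) {s₀ : ℂ}
    (h : ∀ s ∈ ball s₀ (2 * r), (|s.re| + |s.im|) * k ≤ 1 - δ) :
    DifferentiableAt ℂ (fun s => ∫ z, FF b T s z) s₀ := by
  set B : ℝ := ‖s₀‖ + 2 * r with hB
  set A : ℝ := ((Fintype.card ι).factorial * (1 + B * k) ^ Fintype.card ι) with hA
  have hbd : ∀ s ∈ ball s₀ (2 * r), ∀ z, ‖FF b T s z‖ ≤ A * Real.exp (- (b * δ ^ 2) * ‖z‖ ^ 2) := by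
    intro s hs z
    refine FF_bound hT h0 hb hδ.le (h s hs) ?_ z
    have h1 : ‖s - s₀‖ < 2 * r := by simpa [dist_eq_norm] using hs
    have h2 := norm_add_le (s - s₀) s₀
    simp only [sub_add_cancel] at h2
    linarith
  have := hasDerivAt_integral_of_dominated_loc_of_deriv_le (𝕜 := ℂ) (μ := (volume : Measure (EuclideanSpace ℝ ι)))
    (F := fun s z => FF b T s z) (F' := fun s z => deriv (fun s => FF b T s z) s) (x₀ := s₀)
    (s := ball s₀ (r / 2)) (bound := fun z => (A / (r / 2)) * Real.exp (- (b * δ ^ 2) * ‖z‖ ^ 2))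
    (ball_mem_nhds _ (by positivity))
    (Filter.Eventually.of_forall fun s => (FF_measurable b hT.continuous s).aestronglyMeasurable)
    (FF_integrable hT h0 hb hδ (h s₀ (mem_ball_self (by positivity)))) ?_ ?_ ?_ ?_
  · exact this.2.differentiableAt
  · refine (measurable_of_tendsto_metrizable (f := fun (n : ℕ) z => ((1 / ((n : ℂ) + 1)))⁻¹ • (FF b T (s₀ + (1 / ((n : ℂ) + 1))) z - FF b T s₀ z))
      (fun n => ?_) ?_).aestronglyMeasurable
    · have h1 := FF_measurable b hT.continuous s₀
      have h2 := FF_measurable b hT.continuous (s₀ + (1 / ((n : ℂ) + 1)))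
      simp only [smul_eq_mul]
      exact (h2.sub h1).const_mul _
    · rw [tendsto_pi_nhds]
      intro z
      have hd := ((FF_differentiable b T z) s₀).hasDerivAt.tendsto_slope_zero
      refine hd.comp ?_
      rw [tendsto_nhdsWithin_iff]
      constructor
      · exact tendsto_one_div_add_atTop_nhds_zero_nat (𝕜 := ℂ)
      · exact Filter.Eventually.of_forall fun n => by
          simp only [mem_compl_iff, mem_singleton_iff, one_div, inv_eq_zero]
          exact_mod_cast Nat.succ_ne_zero n
  · refine Filter.Eventually.of_forall fun z s hs => ?_
    have := Complex.norm_deriv_le_of_forall_mem_sphere_norm_le (c := s) (R := r / 2)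
      (C := A * Real.exp (- (b * δ ^ 2) * ‖z‖ ^ 2)) (f := fun s => FF b T s z) (by positivity)
      (FF_differentiable b T z).diffContOnCl ?_
    · refine this.trans (le_of_eq (by ring))
    · intro w hw
      apply hbd
      rw [mem_ball] at hs ⊢
      rw [mem_sphere] at hw
      have := dist_triangle w s s₀
      linarith
  · exact (gauss_integrable (b := b * δ ^ 2) (by positivity)).const_mul _
  · exact Filter.Eventually.of_forall fun z s hs => ((FF_differentiable b T z) s).hasDerivAt

lemma null_image {f : EuclideanSpace ℝ ι → EuclideanSpace ℝ ι} {k : NNReal} (hf : LipschitzWith k f)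
    {s : Set (EuclideanSpace ℝ ι)} (hs : volume s = 0) : volume (f '' s) = 0 := by
  have hH := MeasureTheory.isAddHaarMeasure_hausdorffMeasure (E := EuclideanSpace ℝ ι)
  have h1 := Measure.isAddLeftInvariant_eq_smul (volume : Measure (EuclideanSpace ℝ ι)) μH[(Module.finrank ℝ (EuclideanSpace ℝ ι) : ℝ)]
  have h2 := Measure.isAddLeftInvariant_eq_smul μH[(Module.finrank ℝ (EuclideanSpace ℝ ι) : ℝ)] (volume : Measure (EuclideanSpace ℝ ι))
  have h3 : μH[(Module.finrank ℝ (EuclideanSpace ℝ ι) : ℝ)] s = 0 := by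
    rw [h2]; simp [hs]
  have h4 := hf.hausdorffMeasure_image_le (d := Module.finrank ℝ (EuclideanSpace ℝ ι)) (by positivity) s
  rw [h3, mul_zero] at h4
  have h5 := le_antisymm h4 zero_le
  rw [h1, Measure.smul_apply, h5, smul_zero]

lemma inj_add {T : EuclideanSpace ℝ ι → EuclideanSpace ℝ ι} {k : NNReal} (hT : LipschitzWith k T)
    {s : ℝ} (h : |s| * k < 1) : Function.Injective (fun z => z + s • T z) := by
  intro x y hxy
  simp only at hxy
  have h1 : x - y = s • (T y - T x) := by
    rw [smul_sub, sub_eq_sub_iff_add_eq_add, hxy]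
    abel
  have h2 : ‖x - y‖ ≤ |s| * k * ‖x - y‖ := by
    conv_lhs => rw [h1]
    rw [norm_smul, Real.norm_eq_abs, mul_assoc]
    gcongr
    have := hT.dist_le_mul y x
    rwa [dist_eq_norm, dist_eq_norm, norm_sub_rev y x] at this
  have h3 : ‖x - y‖ = 0 := by nlinarith [norm_nonneg (x - y)]
  exact sub_eq_zero.1 (norm_eq_zero.1 h3)

lemma surj_add {T : EuclideanSpace ℝ ι → EuclideanSpace ℝ ι} {k : NNReal} (hT : LipschitzWith k T)
    {s : ℝ} (h : |s| * k < 1) : Function.Surjective (fun z => z + s • T z) := by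
  intro w
  have hc : ContractingWith (‖s‖₊ * k) (fun z => w - s • T z) := by
    constructor
    · rw [← NNReal.coe_lt_coe]; simpa using h
    · refine LipschitzWith.of_dist_le_mul fun x y => ?_
      rw [dist_sub_left, dist_smul₀]
      push_cast
      rw [mul_assoc]
      gcongr
      exact hT.dist_le_mul x y
  refine ⟨hc.fixedPoint, ?_⟩
  have := hc.fixedPoint_isFixedPt
  unfold Function.IsFixedPt at this
  simp only at this
  simp only
  nth_rw 1 [← this]
  simp

lemma det_pos_add {T : EuclideanSpace ℝ ι → EuclideanSpace ℝ ι} {k : NNReal} (hT : LipschitzWith k T)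
    {s : ℝ} (h : |s| * k < 1) (z : EuclideanSpace ℝ ι) : 0 < ((1 : Matrix ι ι ℝ) + s • jac T z).det := by
  have hne : ∀ t ∈ Icc (0:ℝ) 1, ((1 : Matrix ι ι ℝ) + (t * s) • jac T z).det ≠ 0 := by
    intro t ht h0
    rw [← det_one_add_jac, ContinuousLinearMap.det] at h0
    have := LinearMap.bot_lt_ker_of_det_eq_zero h0
    rw [bot_lt_iff_ne_bot, Submodule.ne_bot_iff] at this
    obtain ⟨v, hv, hv0⟩ := this
    simp only [LinearMap.mem_ker] at hv
    have hv' : v + (t * s) • fderiv ℝ T z v = 0 := by simpa using hv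
    have h1 : ‖fderiv ℝ T z v‖ ≤ k * ‖v‖ :=
      (fderiv ℝ T z).le_of_opNorm_le (norm_fderiv_le_of_lipschitz ℝ hT) v
    have h2 : ‖v‖ ≤ |s| * k * ‖v‖ := by
      have hv2 : ‖v‖ = ‖t * s‖ * ‖fderiv ℝ T z v‖ := by
        rw [← norm_smul, ← norm_neg (_ • _)]
        exact congrArg norm (eq_neg_of_add_eq_zero_left hv')
      refine hv2.le.trans ?_
      rw [Real.norm_eq_abs, abs_mul, abs_of_nonneg ht.1]
      have : t * |s| ≤ |s| := by nlinarith [abs_nonneg s, ht.2]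
      calc _ ≤ |s| * (k * ‖v‖) := by gcongr
        _ = _ := by ring
    have h3 : 0 < ‖v‖ := norm_pos_iff.2 hv0
    nlinarith
  by_contra hcon
  push Not at hcon
  have hcont : ContinuousOn (fun t : ℝ => ((1 : Matrix ι ι ℝ) + (t * s) • jac T z).det) (Icc 0 1) := by
    apply Continuous.continuousOn
    apply Continuous.matrix_det
    fun_prop
  have := intermediate_value_Icc' (by norm_num) hcont
  obtain ⟨t, ht, h0⟩ := this (show (0:ℝ) ∈ _ from ⟨by simpa using hcon, by simp⟩)
  exact hne t ht h0

lemma FF_real {T : EuclideanSpace ℝ ι → EuclideanSpace ℝ ι} {k : NNReal} (hT : LipschitzWith k T)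
    (b : ℝ) {s : ℝ} (h : |s| * k < 1) :
    ∫ z, FF b T (s : ℂ) z = ∫ z, FF b T 0 z := by
  set S : Set (EuclideanSpace ℝ ι) := {z | DifferentiableAt ℝ T z} with hS
  have hSm : MeasurableSet S := measurableSet_of_differentiableAt ℝ T
  have hSn : volume Sᶜ = 0 := hT.ae_differentiableAt
  set f : EuclideanSpace ℝ ι → EuclideanSpace ℝ ι := fun z => z + s • T z with hf
  have hlip : LipschitzWith (1 + ‖s‖₊ * k) f := by
    refine LipschitzWith.id.add ?_
    refine LipschitzWith.of_dist_le_mul fun x y => ?_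
    rw [dist_smul₀]
    push_cast
    rw [mul_assoc]
    gcongr
    exact hT.dist_le_mul x y
  have key := integral_image_eq_integral_abs_det_fderiv_smul volume hSm
    (f := f) (f' := fun z => ContinuousLinearMap.id ℝ _ + s • fderiv ℝ T z)
    (fun z hz => ((hasFDerivAt_id z).add ((DifferentiableAt.hasFDerivAt hz).const_smul s)).hasFDerivWithinAt)
    ((inj_add hT h).injOn) (fun z => FF b T 0 z)
  have h1 : ∫ z in f '' S, FF b T 0 z = ∫ z, FF b T 0 z := by
    rw [Measure.restrict_eq_self_of_ae_mem]
    have : volume ((f '' S)ᶜ) = 0 := by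
      refine measure_mono_null ?_ (null_image hlip hSn)
      intro w hw
      obtain ⟨z, rfl⟩ := surj_add hT h w
      refine ⟨z, fun hz => hw ⟨z, hz, rfl⟩, rfl⟩
    exact this
  have h2 : ∫ z in S, FF b T (s:ℂ) z = ∫ z, FF b T (s:ℂ) z := by
    rw [Measure.restrict_eq_self_of_ae_mem]
    exact hSn
  rw [← h1, ← h2, key]
  refine integral_congr_ae (Filter.Eventually.of_forall fun z => ?_)
  simp only
  rw [det_one_add_jac, abs_of_pos (det_pos_add hT h z)]
  simp only [FF, hf]
  simp only [zero_mul, add_zero, zero_smul, Matrix.det_one, mul_one]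
  rw [Complex.real_smul, mul_comm]
  congr 1
  · have : ((1 : Matrix ι ι ℂ) + (s:ℂ) • (jac T z).map Complex.ofReal)
      = ((1 : Matrix ι ι ℝ) + s • jac T z).map Complex.ofReal := by
      ext i j
      by_cases hij : i = j <;> simp [hij]
    rw [this]
    exact (RingHom.map_det Complex.ofRealHom _).symm
  · simp

lemma FF_I {T : EuclideanSpace ℝ ι → EuclideanSpace ℝ ι} {k : NNReal} (hT : LipschitzWith k T)
    (hk : k < 1) (h0 : T 0 = 0) {b : ℝ} (hb : 0 < b) :
    ∫ z, FF b T Complex.I z = ∫ z, FF b T 0 z := by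
  set δ : ℝ := (1 - k) / 4 with hδ
  have hk' : (k : ℝ) < 1 := by exact_mod_cast hk
  have hk0 : (0:ℝ) ≤ k := k.2
  have hδ0 : 0 < δ := by rw [hδ]; linarith
  set U : Set ℂ := (Complex.reCLM ⁻¹' (ball 0 δ)) ∩ (Complex.imCLM ⁻¹' (ball 0 (1 + δ))) with hU
  have hUo : IsOpen U := (isOpen_ball.preimage Complex.reCLM.continuous).inter
    (isOpen_ball.preimage Complex.imCLM.continuous)
  have hUc : Convex ℝ U := ((convex_ball _ _).linear_preimage Complex.reCLM.toLinearMap).inter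
    ((convex_ball _ _).linear_preimage Complex.imCLM.toLinearMap)
  have hUb : ∀ s ∈ U, (|s.re| + |s.im|) * k ≤ 1 - δ := by
    intro s hs
    have h1 : |s.re| < δ := by simpa using hs.1
    have h2 : |s.im| < 1 + δ := by simpa using hs.2
    have h3 : (|s.re| + |s.im|) * k ≤ (1 + 2 * δ) * k := mul_le_mul_of_nonneg_right (by linarith) hk0
    have : (k : ℝ) = 1 - 4 * δ := by rw [hδ]; ring
    rw [this] at h3
    rw [this]
    nlinarith
  have hdiff : DifferentiableOn ℂ (fun s => ∫ z, FF b T s z) U := by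
    intro s hs
    obtain ⟨r, hr, hrU⟩ := Metric.isOpen_iff.1 hUo s hs
    refine (FF_hasDeriv hT h0 hb hδ0 (r := r / 2) (by positivity) fun w hw => hUb w (hrU ?_)).differentiableWithinAt
    convert hw using 2
    ring
  have han := hdiff.analyticOnNhd hUo
  have h0U : (0:ℂ) ∈ U := by simp [hU, hδ0]; linarith
  have hIU : Complex.I ∈ U := by simp [hU, hδ0]
  refine han.eqOn_of_preconnected_of_frequently_eq (g := fun _ => ∫ z, FF b T 0 z)
    analyticOnNhd_const hUc.isPreconnected h0U ?_ hIU
  have ht : Filter.Tendsto (fun n : ℕ => ((1 / ((n : ℝ) + 1) : ℝ) : ℂ)) Filter.atTop (nhdsWithin 0 {0}ᶜ) := by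
    rw [tendsto_nhdsWithin_iff]
    constructor
    · have := (Complex.continuous_ofReal.tendsto 0).comp (tendsto_one_div_add_atTop_nhds_zero_nat (𝕜 := ℝ))
      rw [Complex.ofReal_zero] at this
      exact this
    · exact Filter.Eventually.of_forall fun n => by
        simp only [mem_compl_iff, mem_singleton_iff, Complex.ofReal_eq_zero, one_div, inv_eq_zero]
        positivity
  refine ht.frequently (Filter.Eventually.frequently (Filter.Eventually.of_forall fun n => ?_))
  refine FF_real hT b ?_
  rw [abs_of_nonneg (by positivity)]
  have : 1 / ((n:ℝ) + 1) ≤ 1 := by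
    rw [div_le_one (by positivity)]; linarith [Nat.cast_nonneg (α := ℝ) n]
  nlinarith

lemma key_lower {T : EuclideanSpace ℝ ι → EuclideanSpace ℝ ι} {k : NNReal} (hT : LipschitzWith k T)
    (hk : k < 1) (h0 : T 0 = 0) {b : ℝ} (hb : 0 < b) :
    ENNReal.ofReal ((Real.pi / b) ^ ((Fintype.card ι : ℝ) / 2)) ≤
      ∫⁻ z, ENNReal.ofReal (Real.exp (- b * (‖z‖ ^ 2 - ‖T z‖ ^ 2)) *
        ‖((1 : Matrix ι ι ℂ) + Complex.I • (jac T z).map Complex.ofReal).det‖) := by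
  have h1 : ∫ z, FF b T 0 z = (((Real.pi / b) ^ ((Fintype.card ι : ℝ) / 2) : ℝ) : ℂ) := by
    have := GaussianFourier.integral_rexp_neg_mul_sq_norm (V := EuclideanSpace ℝ ι) hb
    rw [finrank_euclideanSpace] at this
    rw [← this, ← integral_complex_ofReal]
    refine integral_congr_ae (Filter.Eventually.of_forall fun z => ?_)
    simp only [FF, EuclideanSpace.norm_sq_eq]
    simp
  have h2 := FF_I hT hk h0 hb
  rw [h1] at h2
  have h3 := enorm_integral_le_lintegral_enorm (μ := volume) (FF b T Complex.I)
  rw [h2] at h3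
  have h4 : ‖(((Real.pi / b) ^ ((Fintype.card ι : ℝ) / 2) : ℝ) : ℂ)‖ₑ =
      ENNReal.ofReal ((Real.pi / b) ^ ((Fintype.card ι : ℝ) / 2)) := by
    rw [← ofReal_norm, Complex.norm_real, Real.norm_of_nonneg (by positivity)]
  rw [h4] at h3
  refine h3.trans (le_of_eq (lintegral_congr fun z => ?_))
  rw [← ofReal_norm, FF, norm_mul, Complex.norm_exp]
  congr 3
  rw [← Complex.ofReal_neg, Complex.re_ofReal_mul, FF_re]
  simp
  left
  ring
end P1b

section P2
variable {n : ℕ}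

abbrev Euc2 (n : ℕ) := EuclideanSpace ℝ (Fin n ⊕ Fin n)

def pl (z : Euc2 n) : Euc n := WithLp.toLp 2 (fun i => z (Sum.inl i))
def pr (z : Euc2 n) : Euc n := WithLp.toLp 2 (fun i => z (Sum.inr i))
def mk2 (a b : Euc n) : Euc2 n := WithLp.toLp 2 (Sum.elim a b)

@[simp] lemma pl_mk2 (a b : Euc n) : pl (mk2 a b) = a := by ext i; simp [pl, mk2]
@[simp] lemma pr_mk2 (a b : Euc n) : pr (mk2 a b) = b := by ext i; simp [pr, mk2]
@[simp] lemma mk2_inl (a b : Euc n) (i : Fin n) : mk2 a b (Sum.inl i) = a i := by simp [mk2]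
@[simp] lemma mk2_inr (a b : Euc n) (i : Fin n) : mk2 a b (Sum.inr i) = b i := by simp [mk2]
@[simp] lemma pl_add (z w : Euc2 n) : pl (z + w) = pl z + pl w := by ext i; simp [pl]
@[simp] lemma pr_add (z w : Euc2 n) : pr (z + w) = pr z + pr w := by ext i; simp [pr]
@[simp] lemma pl_sub (z w : Euc2 n) : pl (z - w) = pl z - pl w := by ext i; simp [pl]
@[simp] lemma pr_sub (z w : Euc2 n) : pr (z - w) = pr z - pr w := by ext i; simp [pr]
@[simp] lemma pl_zero : pl (0 : Euc2 n) = 0 := by ext i; simp [pl]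
@[simp] lemma pr_zero : pr (0 : Euc2 n) = 0 := by ext i; simp [pr]

lemma norm_sq_euc2 (z : Euc2 n) : ‖z‖ ^ 2 = ‖pl z‖ ^ 2 + ‖pr z‖ ^ 2 := by
  simp [EuclideanSpace.norm_sq_eq, pl, pr]

def TT (ε : ℝ) (c : Euc n → Euc n) (z : Euc2 n) : Euc2 n := mk2 (c (pr z)) (ε • c (pl z))

lemma TT_lip {c : Euc n → Euc n} {k : NNReal} (hc : LipschitzWith k c) {ε : ℝ} (hε : ε ^ 2 = 1) :
    LipschitzWith k (TT ε c) := by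
  refine LipschitzWith.of_dist_le_mul fun x y => ?_
  rw [dist_eq_norm, dist_eq_norm]
  refine abs_le_of_sq_le_sq' ?_ (by positivity) |>.2
  rw [mul_pow, norm_sq_euc2, norm_sq_euc2 (x - y)]
  simp only [TT, pl_sub, pr_sub, pl_mk2, pr_mk2]
  rw [← smul_sub, norm_smul, mul_pow, Real.norm_eq_abs, sq_abs, hε, one_mul]
  have h1 := hc.dist_le_mul (pr x) (pr y)
  have h2 := hc.dist_le_mul (pl x) (pl y)
  rw [dist_eq_norm, dist_eq_norm] at h1 h2
  have h3 := pow_le_pow_left₀ (norm_nonneg _) h1 2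
  have h4 := pow_le_pow_left₀ (norm_nonneg _) h2 2
  rw [mul_pow] at h3 h4
  linarith

lemma jac_lineDeriv {T : Euc2 n → Euc2 n} {z : Euc2 n} (h : DifferentiableAt ℝ T z) (i j : Fin n ⊕ Fin n) :
    jac T z i j = deriv (fun t : ℝ => T (z + t • EuclideanSpace.single j 1) i) 0 := by
  have h1 : HasFDerivAt (fun z => T z i) ((EuclideanSpace.proj i : Euc2 n →L[ℝ] ℝ).comp (fderiv ℝ T z)) z :=
    (EuclideanSpace.proj i : Euc2 n →L[ℝ] ℝ).hasFDerivAt.comp z h.hasFDerivAt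
  have h2 := h1.hasLineDerivAt (EuclideanSpace.single j 1)
  have h3 := h2.lineDeriv
  unfold lineDeriv at h3
  rw [h3]
  rfl

lemma pl_single_inr (z : Euc2 n) (t : ℝ) (j : Fin n) :
    pl (z + t • EuclideanSpace.single (Sum.inr j) 1) = pl z := by
  ext i; simp [pl]
lemma pr_single_inl (z : Euc2 n) (t : ℝ) (j : Fin n) :
    pr (z + t • EuclideanSpace.single (Sum.inl j) 1) = pr z := by
  ext i; simp [pr]

lemma TT_det {c : Euc n → Euc n} {z : Euc2 n} (h1 : DifferentiableAt ℝ (TT 1 c) z)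
    (h2 : DifferentiableAt ℝ (TT (-1) c) z) :
    ‖((1 : Matrix (Fin n ⊕ Fin n) (Fin n ⊕ Fin n) ℂ) +
        Complex.I • (jac (TT (-1) c) z).map Complex.ofReal).det‖ =
      |((1 : Matrix (Fin n ⊕ Fin n) (Fin n ⊕ Fin n) ℝ) + (1:ℝ) • jac (TT 1 c) z).det| := by
  obtain ⟨B, hB⟩ : ∃ B : Matrix (Fin n) (Fin n) ℝ, ∀ i j, B i j = jac (TT 1 c) z (Sum.inl i) (Sum.inr j) := ⟨_, fun _ _ => rfl⟩
  obtain ⟨C, hC⟩ : ∃ B : Matrix (Fin n) (Fin n) ℝ, ∀ i j, B i j = jac (TT 1 c) z (Sum.inr i) (Sum.inl j) := ⟨_, fun _ _ => rfl⟩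
  have e1 : (1 : Matrix (Fin n ⊕ Fin n) (Fin n ⊕ Fin n) ℝ) + (1:ℝ) • jac (TT 1 c) z
      = Matrix.fromBlocks 1 B C 1 := by
    ext i j
    rcases i with i | i <;> rcases j with j | j
    · simp only [Matrix.add_apply, Matrix.smul_apply, Matrix.fromBlocks_apply₁₁, jac_lineDeriv h1]
      simp [TT, -pr_add, pr_single_inl, Matrix.one_apply]
    · simp [hB]
    · simp [hC]
    · simp only [Matrix.add_apply, Matrix.smul_apply, Matrix.fromBlocks_apply₂₂, jac_lineDeriv h1]
      simp [TT, -pl_add, pl_single_inr, Matrix.one_apply]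
  have e2 : (1 : Matrix (Fin n ⊕ Fin n) (Fin n ⊕ Fin n) ℂ) +
        Complex.I • (jac (TT (-1) c) z).map Complex.ofReal
      = Matrix.fromBlocks 1 (Complex.I • B.map Complex.ofReal) (-(Complex.I • C.map Complex.ofReal)) 1 := by
    ext i j
    rcases i with i | i <;> rcases j with j | j
    · simp only [Matrix.add_apply, Matrix.smul_apply, Matrix.map_apply, Matrix.fromBlocks_apply₁₁, jac_lineDeriv h2]
      simp [TT, -pr_add, pr_single_inl, Matrix.one_apply]
    · simp only [Matrix.add_apply, Matrix.smul_apply, Matrix.map_apply, Matrix.fromBlocks_apply₁₂, hB, jac_lineDeriv h2,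
        jac_lineDeriv h1]
      simp [TT]
    · simp only [Matrix.add_apply, Matrix.smul_apply, Matrix.map_apply, Matrix.fromBlocks_apply₂₁, hC, jac_lineDeriv h2,
        jac_lineDeriv h1, Matrix.neg_apply]
      simp [TT]
    · simp only [Matrix.add_apply, Matrix.smul_apply, Matrix.map_apply, Matrix.fromBlocks_apply₂₂, jac_lineDeriv h2]
      simp [TT, -pl_add, pl_single_inr, Matrix.one_apply]
  rw [e1, e2, Matrix.det_fromBlocks_one₁₁, Matrix.det_fromBlocks_one₁₁]
  have e3 : (1 : Matrix (Fin n) (Fin n) ℂ) - -(Complex.I • C.map Complex.ofReal) * (Complex.I • B.map Complex.ofReal)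
      = Complex.ofRealHom.mapMatrix (1 - C * B) := by
    rw [map_sub, map_mul, map_one]
    simp [smul_smul]
    rfl
  rw [e3, ← RingHom.map_det]
  simp

lemma lower_G {c : Euc n → Euc n} {k : NNReal} (hc : LipschitzWith k c) (hk : k < 1) (h0 : c 0 = 0)
    {b : ℝ} (hb : 0 < b) (G : Euc2 n → ℝ≥0∞)
    (hG : ∀ u v : Euc n, ENNReal.ofReal (Real.exp (- b * (‖u‖ ^ 2 + ‖v‖ ^ 2 - ‖c u‖ ^ 2 - ‖c v‖ ^ 2)))
      ≤ G (mk2 (u + c v) (v + c u))) :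
    ENNReal.ofReal ((Real.pi / b) ^ n) ≤ ∫⁻ z, G z := by
  have hT := TT_lip hc (ε := -1) (by norm_num)
  have hS := TT_lip hc (ε := 1) (by norm_num)
  have h1 := key_lower hT hk (by ext i; rcases i with i | i <;> simp [TT, h0]) hb
  have hcard : ((Fintype.card (Fin n ⊕ Fin n) : ℝ) / 2) = n := by simp
  rw [hcard, Real.rpow_natCast] at h1
  refine h1.trans ?_
  set D : Set (Euc2 n) := {z | DifferentiableAt ℝ (TT 1 c) z}
  have hD : MeasurableSet D := measurableSet_of_differentiableAt ℝ _
  have hDn : ∀ᵐ z, z ∈ D := hS.ae_differentiableAt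
  have key := lintegral_image_eq_lintegral_abs_det_fderiv_mul volume hD
    (f := fun z => z + (1:ℝ) • TT 1 c z) (f' := fun z => ContinuousLinearMap.id ℝ _ + (1:ℝ) • fderiv ℝ (TT 1 c) z)
    (fun z hz => ((hasFDerivAt_id z).add ((DifferentiableAt.hasFDerivAt hz).const_smul (1:ℝ))).hasFDerivWithinAt)
    ((inj_add hS (by simpa using hk)).injOn) G
  refine le_trans ?_ (setLIntegral_le_lintegral ((fun z => z + (1:ℝ) • TT 1 c z) '' D) G)
  rw [key, Measure.restrict_eq_self_of_ae_mem hDn]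
  refine lintegral_mono_ae ?_
  filter_upwards [hS.ae_differentiableAt, hT.ae_differentiableAt] with z hz1 hz2
  rw [TT_det hz1 hz2, det_one_add_jac, mul_comm, ENNReal.ofReal_mul (abs_nonneg _)]
  gcongr
  have e1 : ‖z‖ ^ 2 - ‖TT (-1) c z‖ ^ 2 = ‖pl z‖ ^ 2 + ‖pr z‖ ^ 2 - ‖c (pl z)‖ ^ 2 - ‖c (pr z)‖ ^ 2 := by
    rw [norm_sq_euc2, norm_sq_euc2 (TT _ _ _)]
    simp [TT]
    ring
  have e2 : z + (1:ℝ) • TT 1 c z = mk2 (pl z + c (pr z)) (pr z + c (pl z)) := by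
    ext i
    rcases i with i | i <;> simp [TT, pl, pr]
  rw [e1, e2]
  exact hG _ _
end P2

section P3
variable {n : ℕ}
set_option linter.unusedSectionVars false

structure SB (K : Set (Euc n)) : Prop where
  cpt : IsCompact K
  conv : Convex ℝ K
  nhd : K ∈ nhds (0 : Euc n)
  symm : ∀ x ∈ K, -x ∈ K

namespace SB
variable {K : Set (Euc n)}

lemma absorbs (h : SB K) : Absorbent ℝ K := absorbent_nhds_zero h.nhd

lemma exists_ball (h : SB K) : ∃ r > 0, ball (0 : Euc n) r ⊆ K := Metric.mem_nhds_iff.1 h.nhd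

lemma exists_sub (h : SB K) : ∃ R > 0, K ⊆ closedBall (0 : Euc n) R := by
  obtain ⟨R, hR⟩ := h.cpt.isBounded.subset_closedBall (0 : Euc n)
  exact ⟨max R 1, by positivity, hR.trans (closedBall_subset_closedBall (le_max_left _ _))⟩

lemma g_mem (h : SB K) {x : Euc n} : gauge K x ≤ 1 ↔ x ∈ K := by
  rw [gauge_le_one_iff_mem_closure h.conv h.nhd, h.cpt.isClosed.closure_eq]

lemma g_cont (h : SB K) : Continuous (gauge K) := continuous_gauge h.conv h.nhd

lemma g_add (h : SB K) (x y : Euc n) : gauge K (x + y) ≤ gauge K x + gauge K y :=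
  gauge_add_le h.conv h.absorbs x y

lemma g_smul (_h : SB K) {a : ℝ} (ha : 0 ≤ a) (x : Euc n) : gauge K (a • x) = a * gauge K x := by
  rw [gauge_smul_of_nonneg ha, smul_eq_mul]

lemma g_neg (h : SB K) (x : Euc n) : gauge K (-x) = gauge K x := gauge_neg h.symm x

lemma g_smul_abs (h : SB K) (a : ℝ) (x : Euc n) : gauge K (a • x) = |a| * gauge K x := by
  rcases le_total 0 a with ha | ha
  · rw [h.g_smul ha, abs_of_nonneg ha]
  · rw [← h.g_neg, ← neg_smul, h.g_smul (by linarith), abs_of_nonpos ha]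

lemma g_upper (h : SB K) : ∃ a > 0, ∀ x, gauge K x ≤ a * ‖x‖ := by
  obtain ⟨r, hr, hb⟩ := h.exists_ball
  refine ⟨r⁻¹, by positivity, fun x => ?_⟩
  have := mul_gauge_le_norm (x := x) hb
  rw [inv_mul_eq_div, le_div_iff₀ hr]
  linarith

lemma g_lower (h : SB K) : ∃ b > 0, ∀ x, ‖x‖ ≤ b * gauge K x := by
  obtain ⟨R, hR, hb⟩ := h.exists_sub
  refine ⟨R, hR, fun x => ?_⟩
  have := le_gauge_of_subset_closedBall (x := x) h.absorbs hR.le hb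
  rw [div_le_iff₀ hR] at this
  linarith

lemma g_eq_zero (h : SB K) {x : Euc n} (hx : gauge K x = 0) : x = 0 := by
  obtain ⟨b, hb, h1⟩ := h.g_lower
  have := h1 x
  rw [hx, mul_zero] at this
  exact norm_le_zero_iff.1 this

lemma polar (h : SB K) : SB (polarSet K) := by
  obtain ⟨r, hr, hb⟩ := h.exists_ball
  obtain ⟨R, hR, hb'⟩ := h.exists_sub
  have hcl : IsClosed (polarSet K) := by
    have : polarSet K = ⋂ x ∈ K, {y : Euc n | ⟪x, y⟫ ≤ 1} := by
      ext y; simp [polarSet]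
    rw [this]
    exact isClosed_biInter fun x _ => isClosed_le (by fun_prop) (by fun_prop)
  refine ⟨?_, ?_, ?_, ?_⟩
  · refine Metric.isCompact_of_isClosed_isBounded hcl ?_
    refine (isBounded_closedBall (x := (0 : Euc n)) (r := 2 / r)).subset fun y hy => ?_
    rw [mem_closedBall_zero_iff]
    by_contra! hlt
    have hy0 : 0 < ‖y‖ := lt_trans (by positivity) hlt
    have := hy ((r / 2 / ‖y‖) • y) (hb (by
      rw [mem_ball_zero_iff, norm_smul, Real.norm_of_nonneg (by positivity)]
      field_simp; norm_num))
    rw [real_inner_smul_left, real_inner_self_eq_norm_sq] at this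
    rw [div_lt_iff₀ hr] at hlt
    field_simp at this
    linarith
  · intro x hx y hy a b ha hb hab z hz
    rw [inner_add_right, real_inner_smul_right, real_inner_smul_right]
    have := hx z hz
    have := hy z hz
    nlinarith
  · refine Metric.mem_nhds_iff.2 ⟨R⁻¹, by positivity, fun y hy x hx => ?_⟩
    rw [mem_ball_zero_iff] at hy
    have h1 := mem_closedBall_zero_iff.1 (hb' hx)
    calc ⟪x, y⟫ ≤ ‖x‖ * ‖y‖ := real_inner_le_norm _ _
      _ ≤ R * R⁻¹ := by gcongr
      _ = 1 := by field_simp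
  · intro y hy x hx
    have := hy _ (h.symm x hx)
    rwa [inner_neg_left, ← inner_neg_right] at this

lemma inner_le (h : SB K) (x y : Euc n) : ⟪x, y⟫ ≤ gauge K x * gauge (polarSet K) y := by
  rcases (gauge_nonneg x : 0 ≤ gauge K x).eq_or_lt with hx | hx
  · rw [h.g_eq_zero hx.symm]; simp
  rcases (gauge_nonneg y : 0 ≤ gauge (polarSet K) y).eq_or_lt with hy | hy
  · rw [h.polar.g_eq_zero hy.symm]; simp
  have h1 : (gauge K x)⁻¹ • x ∈ K := by
    rw [← h.g_mem, h.g_smul (by positivity), inv_mul_cancel₀ hx.ne']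
  have h2 : (gauge (polarSet K) y)⁻¹ • y ∈ polarSet K := by
    rw [← h.polar.g_mem, h.polar.g_smul (by positivity), inv_mul_cancel₀ hy.ne']
  have := h2 _ h1
  rw [real_inner_smul_left, real_inner_smul_right] at this
  field_simp at this
  exact this

/-- if `⟪x,y⟫ ≤ s * g x` for all x then `h y ≤ s`. -/
lemma polar_gauge_le (h : SB K) {s : ℝ} (hs : 0 ≤ s) {y : Euc n} (hy : ∀ x, gauge K x ≤ 1 → ⟪x, y⟫ ≤ s) :
    gauge (polarSet K) y ≤ s := by
  refine le_of_forall_pos_le_add fun ε hε => ?_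
  refine gauge_le_of_mem (by positivity) ?_
  rw [mem_smul_set_iff_inv_smul_mem₀ (by positivity)]
  intro x hx
  rw [real_inner_smul_right, inv_mul_le_iff₀ (by positivity)]
  have := hy x (h.g_mem.2 hx)
  linarith

/-- existence of the proximal point -/
lemma exists_prox (h : SB K) (w : Euc n) : ∃ x : Euc n,
    ∀ x', gauge K x ^ 2 / 2 + ⟪x' - x, w - x⟫ ≤ gauge K x' ^ 2 / 2 := by
  have hc : Continuous (fun x : Euc n => gauge K x ^ 2 / 2 + ‖x - w‖ ^ 2 / 2) := by
    have := h.g_cont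
    fun_prop
  obtain ⟨x, hx⟩ := hc.exists_forall_le (by
    have : Filter.Tendsto (fun x : Euc n => ‖x - w‖ ^ 2 / 2) (Filter.cocompact _) Filter.atTop := by
      refine Filter.Tendsto.atTop_div_const (by norm_num) ?_
      refine (Filter.tendsto_pow_atTop (by norm_num)).comp ?_
      simp_rw [← dist_eq_norm]
      exact tendsto_dist_right_cocompact_atTop w
    refine Filter.tendsto_atTop_mono (fun x => ?_) this
    have := sq_nonneg (gauge K x)
    linarith)
  refine ⟨x, fun x' => ?_⟩
  by_contra! hlt
  have key : ∀ t : ℝ, 0 < t → t ≤ 1 →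
      gauge K x ^ 2 / 2 + ⟪x' - x, w - x⟫ ≤ gauge K x' ^ 2 / 2 + t * ‖x' - x‖ ^ 2 / 2 := by
    intro t ht ht1
    have h1 := hx ((1 - t) • x + t • x')
    have h2 : gauge K ((1 - t) • x + t • x') ≤ (1 - t) * gauge K x + t * gauge K x' := by
      refine (h.g_add _ _).trans_eq ?_
      rw [h.g_smul (by linarith), h.g_smul ht.le]
    have h3 : gauge K ((1 - t) • x + t • x') ^ 2 ≤ (1 - t) * gauge K x ^ 2 + t * gauge K x' ^ 2 := by
      have := pow_le_pow_left₀ (gauge_nonneg _) h2 2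
      nlinarith [sq_nonneg (gauge K x - gauge K x'), mul_nonneg ht.le (sub_nonneg.2 ht1)]
    have h4 : (1 - t) • x + t • x' - w = (x - w) + t • (x' - x) := by module
    rw [h4, norm_add_sq_real, norm_smul, mul_pow, Real.norm_eq_abs, sq_abs, real_inner_smul_right] at h1
    have h5 : ⟪x - w, x' - x⟫ = - ⟪x' - x, w - x⟫ := by
      rw [real_inner_comm, ← inner_neg_right]; congr 1; abel
    rw [h5] at h1
    have : t * (gauge K x ^ 2 / 2 + ⟪x' - x, w - x⟫) ≤ t * (gauge K x' ^ 2 / 2 + t * ‖x' - x‖ ^ 2 / 2) := by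
      nlinarith
    exact le_of_mul_le_mul_left this ht
  set δ := gauge K x ^ 2 / 2 + ⟪x' - x, w - x⟫ - gauge K x' ^ 2 / 2 with hδ
  have hδ0 : 0 < δ := by simp only [hδ]; linarith
  have hN := sq_nonneg ‖x' - x‖
  set t := min 1 (δ / (‖x' - x‖ ^ 2 + 1))
  have ht : 0 < t := by positivity
  have h1 := key t ht (min_le_left _ _)
  have h2 : t * (‖x' - x‖ ^ 2 + 1) ≤ δ := by
    rw [← le_div_iff₀ (by positivity)]; exact min_le_right _ _
  nlinarith

lemma prox (h : SB K) : ∃ c : Euc n → Euc n, LipschitzWith 1 c ∧ c 0 = 0 ∧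
    ∀ u, gauge K (u + c u) ^ 2 + gauge (polarSet K) (u - c u) ^ 2 ≤ 2 * (‖u‖ ^ 2 - ‖c u‖ ^ 2) := by
  choose p hp using fun u : Euc n => h.exists_prox ((2:ℝ) • u)
  have hx : ∀ u, u + (p u - u) = p u := fun u => by abel
  have hy : ∀ u, u - (p u - u) = (2:ℝ) • u - p u := fun u => by module
  refine ⟨fun u => p u - u, ?_, ?_, ?_⟩
  · refine LipschitzWith.of_dist_le_mul fun u v => ?_
    rw [dist_eq_norm, dist_eq_norm, NNReal.coe_one, one_mul]
    have h1 := hp u (p v)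
    have h2 := hp v (p u)
    have h3 : ⟪p v - p u, (2:ℝ) • u - p u⟫ + ⟪p u - p v, (2:ℝ) • v - p v⟫ ≤ 0 := by linarith
    set a := u - v
    set b := (p u - u) - (p v - v) with hb
    have e : ⟪p v - p u, (2:ℝ) • u - p u⟫ + ⟪p u - p v, (2:ℝ) • v - p v⟫ = -⟪a + b, a - b⟫ := by
      have e1 : p v - p u = -(a + b) := by simp only [a, hb]; abel
      have e2 : p u - p v = a + b := by simp only [a, hb]; abel
      rw [e1, e2, inner_neg_left, ← sub_eq_neg_add, ← inner_sub_right, ← inner_neg_right]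
      congr 1
      simp only [a, hb]; module
    rw [e] at h3
    have h4 : ⟪a + b, a - b⟫ = ‖a‖ ^ 2 - ‖b‖ ^ 2 := by
      clear_value a b
      rw [inner_add_left, inner_sub_right, inner_sub_right, real_inner_self_eq_norm_sq,
        real_inner_self_eq_norm_sq, real_inner_comm a b]; ring
    refine abs_le_of_sq_le_sq' ?_ (norm_nonneg _) |>.2
    linarith
  · have h1 := hp 0 0
    rw [gauge_zero] at h1
    simp only [smul_zero, zero_sub, inner_neg_neg, real_inner_self_eq_norm_sq] at h1
    have : ‖p 0‖ ^ 2 = 0 := by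
      have := sq_nonneg (gauge K (p 0))
      have := sq_nonneg ‖p 0‖
      nlinarith
    have : p 0 = 0 := by simpa using this
    simp [this]
  · intro u
    rw [hx, hy]
    set y := (2:ℝ) • u - p u with hyd
    have e : ‖u‖ ^ 2 - ‖p u - u‖ ^ 2 = ⟪p u, y⟫ := by
      rw [norm_sub_sq_real, hyd, inner_sub_right, real_inner_smul_right, real_inner_self_eq_norm_sq]; ring
    rw [e]
    set s := 2 * (⟪p u, y⟫ - gauge K (p u) ^ 2 / 2)
    have hs : ∀ x', 2 * ⟪x', y⟫ - gauge K x' ^ 2 ≤ s := by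
      intro x'
      have := hp u x'
      rw [← hyd, inner_sub_left] at this
      simp only [s]; linarith
    have hs0 : 0 ≤ s := by simpa using hs 0
    have : gauge (polarSet K) y ≤ √s := by
      refine h.polar_gauge_le (Real.sqrt_nonneg _) fun x hx1 => ?_
      refine Real.le_sqrt_of_sq_le ?_
      have h1 := hs (⟪x, y⟫ • x)
      rw [real_inner_smul_left, h.g_smul_abs, mul_pow, sq_abs] at h1
      have : gauge K x ^ 2 ≤ 1 := pow_le_one₀ (gauge_nonneg _) hx1
      nlinarith [sq_nonneg ⟪x, y⟫]
    have h2 := pow_le_pow_left₀ (gauge_nonneg _) this 2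
    rw [Real.sq_sqrt hs0] at h2
    simp only [s] at h2
    linarith
end SB
end P3

section P4
variable {n : ℕ}
set_option linter.unusedSectionVars false

namespace SB
variable {K : Set (Euc n)}

lemma prox' (h : SB K) : ∃ (c : Euc n → Euc n) (k : NNReal), LipschitzWith k c ∧ k < 1 ∧ c 0 = 0 ∧
    ∀ u, gauge K (u + c u) ^ 2 + gauge (polarSet K) (u - c u) ^ 2 ≤ 4 * (‖u‖ ^ 2 - ‖c u‖ ^ 2) := by
  obtain ⟨c, hc, h0, hu⟩ := h.prox
  obtain ⟨a, ha, ga⟩ := h.g_upper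
  obtain ⟨b, hb, gb⟩ := h.g_lower
  obtain ⟨a', ha', ga'⟩ := h.polar.g_upper
  obtain ⟨b', hb', gb'⟩ := h.polar.g_lower
  set M := (a * b') ^ 2 + (a' * b) ^ 2 with hM
  have hM0 : 0 < M := by positivity
  have m1 : ∀ y, gauge K y ^ 2 ≤ M * gauge (polarSet K) y ^ 2 := by
    intro y
    have : gauge K y ≤ a * b' * gauge (polarSet K) y := by
      refine (ga y).trans ?_
      rw [mul_assoc]
      exact mul_le_mul_of_nonneg_left (gb' y) ha.le
    refine (pow_le_pow_left₀ (gauge_nonneg _) this 2).trans ?_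
    rw [mul_pow]
    refine mul_le_mul_of_nonneg_right ?_ (by positivity)
    have := sq_nonneg (a' * b)
    linarith
  have m2 : ∀ x, gauge (polarSet K) x ^ 2 ≤ M * gauge K x ^ 2 := by
    intro y
    have : gauge (polarSet K) y ≤ a' * b * gauge K y := by
      refine (ga' y).trans ?_
      rw [mul_assoc]
      exact mul_le_mul_of_nonneg_left (gb y) ha'.le
    refine (pow_le_pow_left₀ (gauge_nonneg _) this 2).trans ?_
    rw [mul_pow]
    refine mul_le_mul_of_nonneg_right ?_ (by positivity)
    have := sq_nonneg (a * b')
    linarith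
  set θ := 1 / (M + 2) with hθ
  have hθ0 : 0 < θ := by positivity
  have hθM : θ * (M + 2) = 1 := by rw [hθ]; field_simp
  have hθ1 : 2 * θ < 1 := by nlinarith
  set τ := 1 - 2 * θ with hτ
  have hτ0 : 0 < τ := by linarith
  have hτ1 : τ < 1 := by linarith
  have cvx : ∀ {L : Set (Euc n)}, SB L → ∀ x y : Euc n,
      gauge L ((1 - θ) • x + θ • y) ^ 2 ≤ (1 - θ) * gauge L x ^ 2 + θ * gauge L y ^ 2 := by
    intro L hL x y
    have h2 : gauge L ((1 - θ) • x + θ • y) ≤ (1 - θ) * gauge L x + θ * gauge L y := by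
      refine (hL.g_add _ _).trans_eq ?_
      rw [hL.g_smul (by linarith), hL.g_smul hθ0.le]
    have := pow_le_pow_left₀ (gauge_nonneg _) h2 2
    nlinarith [sq_nonneg (gauge L x - gauge L y), mul_nonneg hθ0.le (by linarith : 0 ≤ 1 - θ)]
  refine ⟨fun u => τ • c u, ⟨τ, hτ0.le⟩, ?_, hτ1, by simp [h0], ?_⟩
  · refine LipschitzWith.of_dist_le_mul fun u v => ?_
    have := hc.dist_le_mul u v
    rw [NNReal.coe_one, one_mul] at this
    rw [dist_smul₀, Real.norm_of_nonneg hτ0.le]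
    exact mul_le_mul_of_nonneg_left this hτ0.le
  · intro u
    have e1 : u + τ • c u = (1 - θ) • (u + c u) + θ • (u - c u) := by rw [hτ]; module
    have e2 : u - τ • c u = (1 - θ) • (u - c u) + θ • (u + c u) := by rw [hτ]; module
    simp only
    have k1 := cvx h (u + c u) (u - c u)
    have k2 := cvx h.polar (u - c u) (u + c u)
    rw [← e1] at k1
    rw [← e2] at k2
    have k3 := mul_le_mul_of_nonneg_left (m1 (u - c u)) hθ0.le
    have k4 := mul_le_mul_of_nonneg_left (m2 (u + c u)) hθ0.le
    have k5 := hu u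
    set A := gauge K (u + c u) ^ 2 with hA
    set B := gauge (polarSet K) (u - c u) ^ 2 with hB
    have hA0 : 0 ≤ A := by positivity
    have hB0 : 0 ≤ B := by positivity
    have k6 : gauge K (u + τ • c u) ^ 2 + gauge (polarSet K) (u - τ • c u) ^ 2 ≤ 2 * (A + B) := by
      have : θ * M ≤ 1 := by nlinarith
      nlinarith
    have k7 : ‖τ • c u‖ ^ 2 ≤ ‖c u‖ ^ 2 := by
      rw [norm_smul, mul_pow, Real.norm_of_nonneg hτ0.le]
      have : τ ^ 2 ≤ 1 := pow_le_one₀ hτ0.le hτ1.le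
      nlinarith [sq_nonneg ‖c u‖]
    linarith

lemma g_add_sq (h : SB K) (x y : Euc n) : gauge K (x + y) ^ 2 ≤ 2 * (gauge K x ^ 2 + gauge K y ^ 2) := by
  have := pow_le_pow_left₀ (gauge_nonneg _) (h.g_add x y) 2
  nlinarith [sq_nonneg (gauge K x - gauge K y)]

def ZZ (K : Set (Euc n)) : ℝ≥0∞ := ∫⁻ x : Euc n, ENNReal.ofReal (Real.exp (-(gauge K x) ^ 2))

lemma lower1 (h : SB K) : ENNReal.ofReal ((Real.pi / 8) ^ n) ≤
    ∫⁻ z : Euc2 n, ENNReal.ofReal (Real.exp (-(gauge K (pl z + pr z)) ^ 2)) *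
      ENNReal.ofReal (Real.exp (-(gauge (polarSet K) (pl z - pr z)) ^ 2)) := by
  obtain ⟨c, k, hc, hk, h0, hu⟩ := h.prox'
  refine lower_G hc hk h0 (by norm_num) _ fun u v => ?_
  rw [← ENNReal.ofReal_mul (by positivity), ← Real.exp_add]
  refine ENNReal.ofReal_le_ofReal (Real.exp_le_exp.2 ?_)
  simp only [pl_mk2, pr_mk2]
  have e1 : u + c v + (v + c u) = (u + c u) + (v + c v) := by abel
  have e2 : u + c v - (v + c u) = (u - c u) + -(v - c v) := by abel
  rw [e1, e2]
  have k1 := h.g_add_sq (u + c u) (v + c v)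
  have k2 := h.polar.g_add_sq (u - c u) (-(v - c v))
  rw [h.polar.g_neg] at k2
  have := hu u
  have := hu v
  linarith

lemma measurePreserving_euc2 :
    MeasurePreserving (fun z : Euc2 n => (pl z, pr z)) volume (volume.prod volume) := by
  have h1 := EuclideanSpace.volume_preserving_symm_measurableEquiv_toLp (Fin n ⊕ Fin n)
  have h2 := MeasureTheory.volume_measurePreserving_sumPiEquivProdPi (fun _ : Fin n ⊕ Fin n => ℝ)
  have h3 := (EuclideanSpace.volume_preserving_symm_measurableEquiv_toLp (Fin n)).symm
  have h4 := (h3.prod h3).comp (h2.comp h1)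
  exact h4

lemma lower (h : SB K) : ENNReal.ofReal ((Real.pi / 8) ^ n) ≤ ZZ K * ZZ (polarSet K) := by
  refine h.lower1.trans ?_
  have cg := h.g_cont
  have ch := h.polar.g_cont
  rw [measurePreserving_euc2.lintegral_comp (f := fun q : Euc n × Euc n =>
    ENNReal.ofReal (Real.exp (-(gauge K (q.1 + q.2)) ^ 2)) *
      ENNReal.ofReal (Real.exp (-(gauge (polarSet K) (q.1 - q.2)) ^ 2))) (by fun_prop)]
  have step : ∀ r : Euc n, (∫⁻ p : Euc n, ENNReal.ofReal (Real.exp (-(gauge K (p + r)) ^ 2)) *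
      ENNReal.ofReal (Real.exp (-(gauge (polarSet K) (p - r)) ^ 2)))
      = ∫⁻ p : Euc n, ENNReal.ofReal (Real.exp (-(gauge K p) ^ 2)) *
      ENNReal.ofReal (Real.exp (-(gauge (polarSet K) (p - (2:ℝ) • r)) ^ 2)) := by
    intro r
    rw [← lintegral_add_right_eq_self (fun p : Euc n => ENNReal.ofReal (Real.exp (-(gauge K p) ^ 2)) *
      ENNReal.ofReal (Real.exp (-(gauge (polarSet K) (p - (2:ℝ) • r)) ^ 2))) r]
    refine lintegral_congr fun p => ?_
    have : p + r - (2:ℝ) • r = p - r := by module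
    rw [this]
  rw [lintegral_prod_symm _ (by fun_prop)]
  simp only [step]
  rw [lintegral_lintegral_swap (by fun_prop)]
  have : ∀ p : Euc n, (∫⁻ r : Euc n, ENNReal.ofReal (Real.exp (-(gauge K p) ^ 2)) *
      ENNReal.ofReal (Real.exp (-(gauge (polarSet K) (p - (2:ℝ) • r)) ^ 2))) ≤
      ENNReal.ofReal (Real.exp (-(gauge K p) ^ 2)) * ZZ (polarSet K) := by
    intro p
    rw [lintegral_const_mul _ (by fun_prop)]
    gcongr
    have e : ∀ r : Euc n, ENNReal.ofReal (Real.exp (-(gauge (polarSet K) (p - (2:ℝ) • r)) ^ 2)) ≤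
       ENNReal.ofReal (Real.exp (-(gauge (polarSet K) ((1/2:ℝ) • p - r)) ^ 2)) := by
      intro r
      have : p - (2:ℝ) • r = (2:ℝ) • ((1/2:ℝ) • p - r) := by module
      rw [this, h.polar.g_smul (by norm_num)]
      have := gauge_nonneg (s := polarSet K) ((1/2:ℝ) • p - r)
      gcongr
      linarith
    refine (lintegral_mono e).trans_eq ?_
    rw [lintegral_sub_left_eq_self (fun r => ENNReal.ofReal (Real.exp (-(gauge (polarSet K) r) ^ 2)))]
    rfl
  refine (lintegral_mono this).trans_eq ?_
  rw [lintegral_mul_const _ (by fun_prop)]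
  rfl
end SB
end P4

section P5
set_option linter.unusedSectionVars false

lemma bm_compact {K L H : Set ℝ} (hK : IsCompact K) (hL : IsCompact L) (hK0 : K.Nonempty) (hL0 : L.Nonempty)
    (h : ∀ a ∈ K, ∀ b ∈ L, (a + b) / 2 ∈ H) : volume K + volume L ≤ 2 * volume H := by
  obtain ⟨k, hk, hkm⟩ := hK.exists_isGreatest hK0
  obtain ⟨l, hl, hlm⟩ := hL.exists_isLeast hL0
  have e1 : volume K = volume ((fun x => x + -l) ⁻¹' K) := (measure_preimage_add_right _ _ _).symm
  have e2 : volume L = volume (((fun x => x + -k) ⁻¹' L) \ {k + l}) := by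
    rw [measure_sdiff_null (by simp)]
    exact (measure_preimage_add_right _ _ _).symm
  have e3 : 2 * volume H = volume ((2:ℝ) • H) := by
    rw [Measure.addHaar_smul]; simp
  rw [e1, e2, e3, ← measure_union]
  · refine measure_mono ?_
    rintro x (hx | ⟨hx, -⟩)
    · refine mem_smul_set.2 ⟨x / 2, ?_, by simp; ring⟩
      have := h _ hx _ hl
      simpa using this
    · refine mem_smul_set.2 ⟨x / 2, ?_, by simp; ring⟩
      have := h _ hk _ hx
      simpa using this
  · rw [Set.disjoint_left]
    rintro x hx ⟨hx1, hx2⟩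
    have a1 := hkm hx
    have a2 := hlm hx1
    apply hx2
    simp only [mem_singleton_iff]
    linarith
  · refine MeasurableSet.diff ?_ (measurableSet_singleton _)
    exact hL.measurableSet.preimage (by fun_prop)

lemma inner_aux {A : Set ℝ} (hA : MeasurableSet A) (hA0 : A.Nonempty) {c X : ℝ≥0∞}
    (h : ∀ K ⊆ A, IsCompact K → K.Nonempty → volume K + c ≤ X) : volume A + c ≤ X := by
  obtain ⟨a, ha⟩ := hA0
  have hc : c ≤ X := le_trans le_add_self (h {a} (by simpa using ha) isCompact_singleton (by simp))
  by_cases hct : c = ⊤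
  · have : X = ⊤ := top_le_iff.1 (hct ▸ hc)
    simp [this]
  refine add_le_of_le_tsub_right_of_le hc ?_
  rw [hA.measure_eq_iSup_isCompact]
  refine iSup_le fun K => iSup_le fun hK => iSup_le fun hKc => ?_
  rcases K.eq_empty_or_nonempty with h0 | h0
  · simp [h0]
  · exact ENNReal.le_sub_of_add_le_right hct (h K hK hKc h0)

lemma bm_one {A B H : Set ℝ} (hA : MeasurableSet A) (hB : MeasurableSet B) (hA0 : A.Nonempty) (hB0 : B.Nonempty)
    (h : ∀ a ∈ A, ∀ b ∈ B, (a + b) / 2 ∈ H) : volume A + volume B ≤ 2 * volume H := by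
  refine inner_aux hA hA0 fun K hK hKc hK0 => ?_
  rw [add_comm]
  refine inner_aux hB hB0 fun L hL hLc hL0 => ?_
  rw [add_comm]
  exact bm_compact hKc hLc hK0 hL0 fun a ha b hb => h a (hK ha) b (hL hb)

lemma pl_norm {f g h : ℝ → ℝ} (hf : Measurable f) (hg : Measurable g) (hh : Measurable h)
    (hf0 : ∀ x, 0 ≤ f x) (hg0 : ∀ x, 0 ≤ g x) (hh0 : ∀ x, 0 ≤ h x)
    (hf1 : ∀ x, f x ≤ 1) (hg1 : ∀ x, g x ≤ 1) (hfs : ∀ t < 1, ∃ x, t < f x) (hgs : ∀ t < 1, ∃ x, t < g x)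
    (H : ∀ x y, f x * g y ≤ h ((x + y) / 2) ^ 2) :
    (∫⁻ x, ENNReal.ofReal (f x)) + (∫⁻ x, ENNReal.ofReal (g x)) ≤ 2 * ∫⁻ x, ENNReal.ofReal (h x) := by
  rw [lintegral_eq_lintegral_meas_lt _ (.of_forall hf0) hf.aemeasurable,
    lintegral_eq_lintegral_meas_lt _ (.of_forall hg0) hg.aemeasurable,
    lintegral_eq_lintegral_meas_lt _ (.of_forall hh0) hh.aemeasurable,
    ← lintegral_const_mul' _ _ (by simp)]
  refine (le_lintegral_add _ _).trans (setLIntegral_mono' measurableSet_Ioi fun t ht => ?_)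
  rw [mem_Ioi] at ht
  rcases lt_or_ge t 1 with h1 | h1
  · refine bm_one (measurableSet_lt measurable_const hf) (measurableSet_lt measurable_const hg)
      (hfs t h1) (hgs t h1) fun a ha b hb => ?_
    simp only [mem_ofPred_eq] at ha hb ⊢
    refine lt_of_pow_lt_pow_left₀ 2 (hh0 _) (lt_of_lt_of_le ?_ (H a b))
    nlinarith
  · have a1 : {a | t < f a} = ∅ := by ext x; simp; linarith [hf1 x]
    have a2 : {a | t < g a} = ∅ := by ext x; simp; linarith [hg1 x]
    rw [a1, a2]; simp

lemma amgm_enn {a b c : ℝ≥0∞} (h : a + b ≤ 2 * c) : a * b ≤ c ^ 2 := by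
  by_cases hc : c = ⊤
  · simp [hc]
  have h2 : a + b ≠ ⊤ := ne_top_of_le_ne_top (ENNReal.mul_ne_top (by simp) hc) h
  have ha : a ≠ ⊤ := fun e => h2 (by simp [e])
  have hb : b ≠ ⊤ := fun e => h2 (by simp [e])
  lift a to NNReal using ha
  lift b to NNReal using hb
  lift c to NNReal using hc
  norm_cast at h ⊢
  rw [← NNReal.coe_le_coe] at h ⊢
  push_cast at h ⊢
  nlinarith [sq_nonneg ((a:ℝ) - b), a.coe_nonneg, b.coe_nonneg, c.coe_nonneg]

lemma pl_bdd {f g h : ℝ → ℝ} (hf : Measurable f) (hg : Measurable g) (hh : Measurable h)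
    (hf0 : ∀ x, 0 ≤ f x) (hg0 : ∀ x, 0 ≤ g x) (hh0 : ∀ x, 0 ≤ h x) {N : ℝ}
    (hf1 : ∀ x, f x ≤ N) (hg1 : ∀ x, g x ≤ N)
    (H : ∀ x y, f x * g y ≤ h ((x + y) / 2) ^ 2) :
    (∫⁻ x, ENNReal.ofReal (f x)) * (∫⁻ x, ENNReal.ofReal (g x)) ≤ (∫⁻ x, ENNReal.ofReal (h x)) ^ 2 := by
  have bf : BddAbove (range f) := ⟨N, by rintro _ ⟨x, rfl⟩; exact hf1 x⟩
  have bg : BddAbove (range g) := ⟨N, by rintro _ ⟨x, rfl⟩; exact hg1 x⟩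
  set A := ⨆ x, f x with hA
  set B := ⨆ x, g x with hB
  have lA : ∀ x, f x ≤ A := fun x => le_ciSup bf x
  have lB : ∀ x, g x ≤ B := fun x => le_ciSup bg x
  have A0 : 0 ≤ A := (hf0 0).trans (lA 0)
  have B0 : 0 ≤ B := (hg0 0).trans (lB 0)
  rcases A0.eq_or_lt with h0 | hA0
  · have : ∀ x, f x = 0 := fun x => le_antisymm (h0 ▸ lA x) (hf0 x)
    simp [this]
  rcases B0.eq_or_lt with h0 | hB0
  · have : ∀ x, g x = 0 := fun x => le_antisymm (h0 ▸ lB x) (hg0 x)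
    simp [this]
  set C := √(A * B) with hC
  have hC0 : 0 < C := Real.sqrt_pos.2 (by positivity)
  have hC2 : C ^ 2 = A * B := Real.sq_sqrt (by positivity)
  have key := pl_norm (f := fun x => A⁻¹ * f x) (g := fun x => B⁻¹ * g x) (h := fun x => C⁻¹ * h x)
    (by fun_prop) (by fun_prop) (by fun_prop) (fun x => mul_nonneg (by positivity) (hf0 x))
    (fun x => mul_nonneg (by positivity) (hg0 x)) (fun x => mul_nonneg (by positivity) (hh0 x))
    (fun x => by rw [inv_mul_le_iff₀ hA0, mul_one]; exact lA x)
    (fun x => by rw [inv_mul_le_iff₀ hB0, mul_one]; exact lB x)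
    (fun t ht => by
      obtain ⟨x, hx⟩ := exists_lt_of_lt_ciSup (show t * A < ⨆ x, f x by rw [← hA]; nlinarith)
      exact ⟨x, by rw [lt_inv_mul_iff₀ hA0]; linarith⟩)
    (fun t ht => by
      obtain ⟨x, hx⟩ := exists_lt_of_lt_ciSup (show t * B < ⨆ x, g x by rw [← hB]; nlinarith)
      exact ⟨x, by rw [lt_inv_mul_iff₀ hB0]; linarith⟩)
    (fun x y => by
      have : A⁻¹ * f x * (B⁻¹ * g y) = (A * B)⁻¹ * (f x * g y) := by field_simp
      rw [this, mul_pow, inv_pow, hC2]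
      exact mul_le_mul_of_nonneg_left (H x y) (by positivity))
  have e : ∀ {c : ℝ} (_ : 0 < c) (f : ℝ → ℝ), (∫⁻ x, ENNReal.ofReal (c⁻¹ * f x)) =
      ENNReal.ofReal c⁻¹ * ∫⁻ x, ENNReal.ofReal (f x) := by
    intro c hc f
    rw [← lintegral_const_mul' _ _ (by simp)]
    refine lintegral_congr fun x => ?_
    rw [ENNReal.ofReal_mul (by positivity)]
  simp only [e hA0, e hB0, e hC0] at key
  have k2 := amgm_enn key
  have k3 := mul_le_mul_right k2 (ENNReal.ofReal (A * B))
  set If := ∫⁻ x, ENNReal.ofReal (f x)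
  set Ig := ∫⁻ x, ENNReal.ofReal (g x)
  set Ih := ∫⁻ x, ENNReal.ofReal (h x)
  have e1 : ENNReal.ofReal (A * B) * (ENNReal.ofReal A⁻¹ * If * (ENNReal.ofReal B⁻¹ * Ig)) = If * Ig := by
    have : ENNReal.ofReal (A * B) * (ENNReal.ofReal A⁻¹ * ENNReal.ofReal B⁻¹) = 1 := by
      rw [← ENNReal.ofReal_mul (by positivity), ← ENNReal.ofReal_mul (by positivity)]
      rw [show A * B * (A⁻¹ * B⁻¹) = 1 by field_simp, ENNReal.ofReal_one]
    calc _ = ENNReal.ofReal (A * B) * (ENNReal.ofReal A⁻¹ * ENNReal.ofReal B⁻¹) * (If * Ig) := by ring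
      _ = _ := by rw [this, one_mul]
  have e2 : ENNReal.ofReal (A * B) * (ENNReal.ofReal C⁻¹ * Ih) ^ 2 = Ih ^ 2 := by
    have : ENNReal.ofReal (A * B) * (ENNReal.ofReal C⁻¹) ^ 2 = 1 := by
      rw [← ENNReal.ofReal_pow (by positivity), ← ENNReal.ofReal_mul (by positivity), ← hC2]
      rw [show C ^ 2 * C⁻¹ ^ 2 = 1 by field_simp, ENNReal.ofReal_one]
    rw [mul_pow, ← mul_assoc, this, one_mul]
  rw [e1, e2] at k3
  exact k3

lemma pl_one {f g h : ℝ → ℝ≥0∞} (hf : Measurable f) (hg : Measurable g) (hh : Measurable h)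
    (H : ∀ x y, f x * g y ≤ h ((x + y) / 2) ^ 2) :
    (∫⁻ x, f x) * (∫⁻ x, g x) ≤ (∫⁻ x, h x) ^ 2 := by
  have key : ∀ N : ℕ, (∫⁻ x, min (f x) N) * (∫⁻ x, min (g x) N) ≤ (∫⁻ x, h x) ^ 2 := by
    intro N
    have ft : ∀ u : ℝ → ℝ≥0∞, ∀ x, min (u x) N ≠ ⊤ := fun u x =>
      ne_top_of_le_ne_top (ENNReal.natCast_ne_top N) (min_le_right _ _)
    have := pl_bdd (f := fun x => (min (f x) N).toReal) (g := fun x => (min (g x) N).toReal)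
      (h := fun x => (min (h x) N).toReal) (N := N) (by fun_prop) (by fun_prop) (by fun_prop)
      (fun _ => ENNReal.toReal_nonneg) (fun _ => ENNReal.toReal_nonneg) (fun _ => ENNReal.toReal_nonneg)
      (fun x => by
        have := ENNReal.toReal_mono (ENNReal.natCast_ne_top N) (min_le_right (f x) N)
        simpa using this)
      (fun x => by
        have := ENNReal.toReal_mono (ENNReal.natCast_ne_top N) (min_le_right (g x) N)
        simpa using this)
      (fun x y => by
        rw [← ENNReal.toReal_mul, ← ENNReal.toReal_pow]
        refine ENNReal.toReal_mono (ENNReal.pow_ne_top (ft h _)) ?_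
        rcases le_total (h ((x + y) / 2)) N with h1 | h1
        · rw [min_eq_left h1]
          exact le_trans (mul_le_mul' (min_le_left _ _) (min_le_left _ _)) (H x y)
        · rw [min_eq_right h1, sq]
          exact mul_le_mul' (min_le_right _ _) (min_le_right _ _))
    simp only [ENNReal.ofReal_toReal (ft _ _)] at this
    refine this.trans ?_
    gcongr
    exact min_le_left _ _
  have sup : ∀ {u : ℝ → ℝ≥0∞}, Measurable u → ∫⁻ x, u x = ⨆ N : ℕ, ∫⁻ x, min (u x) N := by
    intro u hu
    rw [← lintegral_iSup (fun N => by fun_prop) (fun a b hab x => by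
      simp only
      gcongr)]
    refine lintegral_congr fun x => ?_
    rw [← inf_iSup_eq, ENNReal.iSup_natCast, inf_top_eq]
  rw [sup hf, sup hg, ENNReal.iSup_mul]
  refine iSup_le fun N => ?_
  rw [ENNReal.mul_iSup]
  refine iSup_le fun M => ?_
  refine le_trans ?_ (key (max N M))
  gcongr
  · exact le_max_left _ _
  · exact le_max_right _ _

lemma lint_cons {n : ℕ} {f : (Fin (n + 1) → ℝ) → ℝ≥0∞} (hf : Measurable f) :
    ∫⁻ z, f z = ∫⁻ a : ℝ, ∫⁻ x : Fin n → ℝ, f (Fin.cons a x) := by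
  have h := (volume_preserving_piFinSuccAbove (fun _ : Fin (n+1) => ℝ) 0).symm
  rw [← h.lintegral_comp hf]
  rw [Measure.volume_eq_prod]
  rw [lintegral_prod _ (by exact (hf.comp h.measurable).aemeasurable)]
  simp [MeasurableEquiv.piFinSuccAbove, Fin.insertNthEquiv, Fin.insertNth_zero']

lemma measurable_cons {n : ℕ} : Measurable (fun p : ℝ × (Fin n → ℝ) => (Fin.cons p.1 p.2 : Fin (n+1) → ℝ)) := by
  refine measurable_pi_lambda _ fun i => ?_
  refine Fin.cases ?_ (fun j => ?_) i
  · simp only [Fin.cons_zero]; fun_prop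
  · simp only [Fin.cons_succ]; fun_prop

lemma pl_n : ∀ (n : ℕ) {f g h : (Fin n → ℝ) → ℝ≥0∞} (_ : Measurable f) (_ : Measurable g) (_ : Measurable h)
    (_ : ∀ x y, f x * g y ≤ h ((1/2 : ℝ) • (x + y)) ^ 2),
    (∫⁻ x, f x) * (∫⁻ x, g x) ≤ (∫⁻ x, h x) ^ 2 := by
  intro n
  induction n with
  | zero =>
    intro f g h hf hg hh H
    rw [lintegral_unique, lintegral_unique, lintegral_unique]
    have : (volume : Measure (Fin 0 → ℝ)) univ = 1 := by
      rw [volume_pi, Measure.pi_of_empty (fun _ : Fin 0 => (volume : Measure ℝ))]; simp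
    rw [this]
    simp only [mul_one]
    convert H default default
  | succ n ih =>
    intro f g h hf hg hh H
    rw [lint_cons hf, lint_cons hg, lint_cons hh]
    have m : ∀ {u : (Fin (n+1) → ℝ) → ℝ≥0∞}, Measurable u →
        Measurable (fun p : ℝ × (Fin n → ℝ) => u (Fin.cons p.1 p.2)) := fun hu => hu.comp measurable_cons
    refine pl_one ?_ ?_ ?_ fun a b => ?_
    · exact (m hf).lintegral_prod_right'
    · exact (m hg).lintegral_prod_right'
    · exact (m hh).lintegral_prod_right'
    · refine ih ((m hf).comp measurable_prodMk_left) ((m hg).comp measurable_prodMk_left)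
        ((m hh).comp measurable_prodMk_left) fun x y => ?_
      refine (H _ _).trans_eq ?_
      congr 2
      ext i
      refine Fin.cases ?_ (fun j => ?_) i
      · simp; ring
      · simp; ring
end P5

section P6
set_option linter.unusedSectionVars false

lemma lsc_mul {X : Type*} [TopologicalSpace X] {f g : X → ℝ≥0∞} (hf : LowerSemicontinuous f)
    (hg : LowerSemicontinuous g) : LowerSemicontinuous (fun x => f x * g x) := by
  intro x c hc
  have : ∃ a < f x, ∃ b < g x, c < a * b := by
    by_contra! hcon
    exact absurd (ENNReal.mul_le_of_forall_lt hcon) (not_le.2 hc)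
  obtain ⟨a, ha, b, hb, hab⟩ := this
  filter_upwards [hf x a ha, hg x b hb] with y h1 h2
  exact hab.trans_le (mul_le_mul' h1.le h2.le)

lemma lsc_sqrt {X : Type*} [TopologicalSpace X] {f : X → ℝ≥0∞} (hf : LowerSemicontinuous f) :
    LowerSemicontinuous (fun x => f x ^ (1/2 : ℝ)) :=
  (ENNReal.continuous_rpow_const (y := (1/2:ℝ))).comp_lowerSemicontinuous hf
    (ENNReal.monotone_rpow_of_nonneg (by norm_num))

lemma lsc_lintegral {X : Type*} [TopologicalSpace X] [FirstCountableTopology X]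
    {f : X × ℝ → ℝ≥0∞} (hf : LowerSemicontinuous f) : LowerSemicontinuous (fun x => ∫⁻ t : ℝ, f (x, t)) := by
  intro x
  refine lowerSemicontinuousAt_iff_le_liminf.2 ?_
  have hs : ∀ t, LowerSemicontinuous (fun x => f (x, t)) := fun t => hf.comp (by fun_prop)
  have hm : ∀ x, Measurable (fun t => f (x, t)) := fun x =>
    (show LowerSemicontinuous (fun t => f (x, t)) from hf.comp (by fun_prop)).measurable
  calc ∫⁻ t : ℝ, f (x, t) ≤ ∫⁻ t : ℝ, Filter.liminf (fun x => f (x, t)) (nhds x) :=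
        lintegral_mono fun t => lowerSemicontinuousAt_iff_le_liminf.1 (hs t x)
    _ ≤ _ := lintegral_liminf_le hm

lemma lint_even {p : ℝ → ℝ≥0∞} (hp : Measurable p) (he : ∀ t, p (-t) = p t) :
    ∫⁻ t, p t = 2 * ∫⁻ t in Ioi 0, p t := by
  rw [← lintegral_add_compl p (measurableSet_Ioi (a := (0:ℝ))), two_mul]
  congr 1
  rw [compl_Ioi, ← setLIntegral_congr (Iio_ae_eq_Iic (a := (0:ℝ)))]
  have := (Measure.measurePreserving_neg (volume : Measure ℝ)).setLIntegral_comp_preimage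
    (measurableSet_Iio (a := (0:ℝ))) hp
  rw [← this]
  simp [he]

lemma lint_exp_sub {p : ℝ → ℝ≥0∞} :
    ∫⁻ t in Ioi 0, p t = ∫⁻ a, ENNReal.ofReal (Real.exp a) * p (Real.exp a) := by
  have := lintegral_image_eq_lintegral_abs_deriv_mul (s := univ) (f := Real.exp) (f' := Real.exp)
    MeasurableSet.univ (fun x _ => (Real.hasDerivAt_exp x).hasDerivWithinAt) Real.exp_injective.injOn p
  rw [image_univ, Real.range_exp] at this
  rw [this]
  simp

lemma lint_gauss : ∫⁻ t : ℝ, ENNReal.ofReal (Real.exp (-t ^ 2)) = ENNReal.ofReal (√Real.pi) := by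
  have h := integral_gaussian 1
  have h2 := integrable_exp_neg_mul_sq (b := 1) (by norm_num)
  rw [← ofReal_integral_eq_lintegral_ofReal (by simpa using h2) (.of_forall fun x => by positivity)]
  simp at h
  rw [h]

lemma half_line {p q : ℝ → ℝ≥0∞} (hp : Measurable p) (hq : Measurable q) (hpe : ∀ t, p (-t) = p t)
    (hqe : ∀ t, q (-t) = q t) {A : ℝ≥0∞}
    (H : ∀ t s, p t * q s ≤ A * ENNReal.ofReal (Real.exp (-2 * (t * s)))) :
    (∫⁻ t, p t) * (∫⁻ t, q t) ≤ A * ENNReal.ofReal Real.pi := by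
  have sq2 : (A ^ (1/2:ℝ)) ^ 2 = A := by
    rw [← ENNReal.rpow_natCast, ← ENNReal.rpow_mul]; norm_num
  have key := pl_one (f := fun a => ENNReal.ofReal (Real.exp a) * p (Real.exp a))
    (g := fun a => ENNReal.ofReal (Real.exp a) * q (Real.exp a))
    (h := fun c => A ^ (1/2:ℝ) * (ENNReal.ofReal (Real.exp c) * ENNReal.ofReal (Real.exp (-(Real.exp c) ^ 2))))
    (by fun_prop) (by fun_prop) (by fun_prop) (fun a b => by
      have h1 := H (Real.exp a) (Real.exp b)
      calc _ = ENNReal.ofReal (Real.exp a) * ENNReal.ofReal (Real.exp b) * (p (Real.exp a) * q (Real.exp b)) := by ring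
        _ ≤ ENNReal.ofReal (Real.exp a) * ENNReal.ofReal (Real.exp b) *
            (A * ENNReal.ofReal (Real.exp (-2 * (Real.exp a * Real.exp b)))) := by gcongr
        _ = A * ENNReal.ofReal (Real.exp a * Real.exp b * (Real.exp (-2 * (Real.exp a * Real.exp b)))) := by
            rw [ENNReal.ofReal_mul (by positivity), ENNReal.ofReal_mul (by positivity)]; ring
        _ ≤ _ := by
            rw [mul_pow, sq2, ← ENNReal.ofReal_mul (by positivity), ← ENNReal.ofReal_pow (by positivity)]
            gcongr
            refine le_of_eq ?_
            have e : Real.exp ((a + b) / 2) ^ 2 = Real.exp a * Real.exp b := by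
              rw [← Real.exp_nat_mul, ← Real.exp_add]; congr 1; push_cast; ring
            rw [mul_pow, e, ← Real.exp_nat_mul]
            congr 2; push_cast; ring)
  rw [lintegral_const_mul _ (by fun_prop), ← lint_exp_sub, ← lint_exp_sub,
    ← lint_exp_sub (p := fun r => ENNReal.ofReal (Real.exp (- r ^ 2)))] at key
  have g2 := lint_even (p := fun r : ℝ => ENNReal.ofReal (Real.exp (- r ^ 2))) (by fun_prop) (by simp)
  rw [lint_gauss] at g2
  rw [lint_even hp hpe, lint_even hq hqe]
  set P := ∫⁻ t in Ioi 0, p t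
  set Q := ∫⁻ t in Ioi 0, q t
  set I := ∫⁻ r in Ioi (0:ℝ), ENNReal.ofReal (Real.exp (- r ^ 2))
  calc 2 * P * (2 * Q) = 4 * (P * Q) := by ring
    _ ≤ 4 * (A ^ (1/2:ℝ) * I) ^ 2 := by gcongr
    _ = A * (2 * I) ^ 2 := by rw [mul_pow, sq2]; ring
    _ = A * ENNReal.ofReal Real.pi := by
      rw [← g2, ← ENNReal.ofReal_pow (by positivity), Real.sq_sqrt (by positivity)]

lemma continuous_cons {n : ℕ} : Continuous (fun p : ℝ × (Fin n → ℝ) => (Fin.cons p.1 p.2 : Fin (n+1) → ℝ)) := by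
  refine continuous_pi fun i => ?_
  refine Fin.cases ?_ (fun j => ?_) i
  · simp only [Fin.cons_zero]; fun_prop
  · simp only [Fin.cons_succ]; fun_prop

lemma neg_cons {n : ℕ} (a : ℝ) (x : Fin n → ℝ) : -(Fin.cons a x : Fin (n+1) → ℝ) = Fin.cons (-a) (-x) := by
  ext i
  refine Fin.cases ?_ (fun j => ?_) i <;> simp

lemma sq_le_enn {a b : ℝ≥0∞} (h : a * a ≤ b ^ 2) : a ≤ b := by
  rw [← sq] at h
  exact (ENNReal.pow_le_pow_left_iff (by norm_num)).1 h

def ft {n : ℕ} (f : (Fin (n+1) → ℝ) → ℝ≥0∞) (q : (Fin n → ℝ) × ℝ) : ℝ≥0∞ :=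
  ⨆ v : ℝ, (f (Fin.cons (v + q.2) q.1) * f (Fin.cons (v - q.2) q.1)) ^ (1/2:ℝ)
def gt {n : ℕ} (g : (Fin (n+1) → ℝ) → ℝ≥0∞) (q : (Fin n → ℝ) × ℝ) : ℝ≥0∞ :=
  ⨆ w : Fin n → ℝ, (g (Fin.cons q.2 (q.1 + w)) * g (Fin.cons (-q.2) (q.1 - w))) ^ (1/2:ℝ)

lemma sqrt_sq_enn (A : ℝ≥0∞) : (A ^ (1/2:ℝ)) ^ 2 = A := by
    rw [← ENNReal.rpow_natCast, ← ENNReal.rpow_mul]; norm_num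

lemma sqrt_sq_enn' (A : ℝ≥0∞) : (A ^ 2) ^ (1/2:ℝ) = A := by
    rw [← ENNReal.rpow_natCast, ← ENNReal.rpow_mul]; norm_num

theorem santalo : ∀ (n : ℕ) {f g : (Fin n → ℝ) → ℝ≥0∞} (_ : LowerSemicontinuous f) (_ : LowerSemicontinuous g)
    (_ : ∀ x, f (-x) = f x) (_ : ∀ x, g (-x) = g x) {A : ℝ≥0∞}
    (_ : ∀ x y, f x * g y ≤ A * ENNReal.ofReal (Real.exp (-2 * (x ⬝ᵥ y)))),
    (∫⁻ x, f x) * (∫⁻ x, g x) ≤ A * ENNReal.ofReal Real.pi ^ n := by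
  intro n
  induction n with
  | zero =>
    intro f g hf hg fe ge A H
    rw [lintegral_unique, lintegral_unique]
    have : (volume : Measure (Fin 0 → ℝ)) univ = 1 := by
      rw [volume_pi, Measure.pi_of_empty (fun _ : Fin 0 => (volume : Measure ℝ))]; simp
    rw [this]
    have h0 := H default default
    have e : (default : Fin 0 → ℝ) ⬝ᵥ (default : Fin 0 → ℝ) = 0 := by simp [dotProduct]
    rw [e] at h0
    simp only [mul_zero, Real.exp_zero, ENNReal.ofReal_one, mul_one, pow_zero] at h0 ⊢
    convert h0
  | succ n ih =>
    intro f g hf hg fe ge A H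
    have lf : LowerSemicontinuous (ft f) := by
      refine lowerSemicontinuous_iSup fun v => lsc_sqrt (lsc_mul ?_ ?_)
      · exact hf.comp (continuous_cons.comp (by fun_prop : Continuous fun q : (Fin n → ℝ) × ℝ => (v + q.2, q.1)))
      · exact hf.comp (continuous_cons.comp (by fun_prop : Continuous fun q : (Fin n → ℝ) × ℝ => (v - q.2, q.1)))
    have lg : LowerSemicontinuous (gt g) := by
      refine lowerSemicontinuous_iSup fun v => lsc_sqrt (lsc_mul ?_ ?_)
      · exact hg.comp (continuous_cons.comp (by fun_prop : Continuous fun q : (Fin n → ℝ) × ℝ => (q.2, q.1 + v)))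
      · exact hg.comp (continuous_cons.comp (by fun_prop : Continuous fun q : (Fin n → ℝ) × ℝ => (-q.2, q.1 - v)))
    have H2 : ∀ x t ξ s, ft f (x, t) * gt g (ξ, s) ≤
        (A * ENNReal.ofReal (Real.exp (-2 * (x ⬝ᵥ ξ)))) * ENNReal.ofReal (Real.exp (-2 * (t * s))) := by
      intro x t ξ s
      unfold ft gt
      rw [ENNReal.iSup_mul]
      refine iSup_le fun v => ?_
      rw [ENNReal.mul_iSup]
      refine iSup_le fun w => ?_
      rw [← ENNReal.mul_rpow_of_nonneg _ _ (by norm_num)]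
      have h1 := H (Fin.cons (v + t) x) (Fin.cons s (ξ + w))
      have h2 := H (Fin.cons (v - t) x) (Fin.cons (-s) (ξ - w))
      have h3 := mul_le_mul' h1 h2
      rw [← sqrt_sq_enn' (A * ENNReal.ofReal (Real.exp (-2 * (x ⬝ᵥ ξ))) * ENNReal.ofReal (Real.exp (-2 * (t * s))))]
      refine ENNReal.rpow_le_rpow ?_ (by norm_num)
      simp only
      calc _ = _ := by rw [mul_mul_mul_comm]
        _ ≤ _ := h3
        _ = _ := by
          rw [mul_mul_mul_comm, mul_pow, mul_pow, ← sq, mul_assoc (A ^ 2)]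
          congr 1
          rw [← ENNReal.ofReal_pow (by positivity), ← ENNReal.ofReal_pow (by positivity),
            ← ENNReal.ofReal_mul (by positivity), ← ENNReal.ofReal_mul (by positivity)]
          congr 1
          rw [← Real.exp_nat_mul, ← Real.exp_nat_mul, ← Real.exp_add, ← Real.exp_add]
          congr 1
          simp [dotProduct, Fin.sum_univ_succ, mul_add, mul_sub, Finset.sum_add_distrib]
          ring
    have F1 : ∀ x, ∫⁻ a, f (Fin.cons a x) ≤ ∫⁻ t, ft f (x, t) := by
      intro x
      have mx : LowerSemicontinuous (fun a : ℝ => f (Fin.cons a x)) :=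
        hf.comp (continuous_cons.comp (by fun_prop : Continuous fun a : ℝ => (a, x)))
      have mt : LowerSemicontinuous (fun t : ℝ => ft f (x, t)) := lf.comp (by fun_prop)
      have := pl_one (f := fun a => f (Fin.cons a x)) (g := fun b => f (Fin.cons (-b) x))
        (h := fun t => ft f (x, t)) mx.measurable (mx.measurable.comp measurable_neg) mt.measurable (fun a b => by
          rw [← sqrt_sq_enn (f (Fin.cons a x) * f (Fin.cons (-b) x))]
          gcongr
          refine le_trans (le_of_eq ?_) (le_iSup _ ((a - b) / 2))
          simp only
          congr 4 <;> ring)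
      rw [lintegral_neg_eq_self (fun b => f (Fin.cons b x))] at this
      exact sq_le_enn this
    have G1 : ∀ s, ∫⁻ η, g (Fin.cons s η) ≤ ∫⁻ ξ, gt g (ξ, s) := by
      intro s
      have mx : ∀ s, LowerSemicontinuous (fun η => g (Fin.cons s η)) := fun s =>
        hg.comp (continuous_cons.comp (by fun_prop : Continuous fun η : Fin n → ℝ => (s, η)))
      have mt : LowerSemicontinuous (fun ξ => gt g (ξ, s)) := lg.comp (by fun_prop)
      have := pl_n n (f := fun η => g (Fin.cons s η)) (g := fun η => g (Fin.cons (-s) η))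
        (h := fun ξ => gt g (ξ, s)) (mx s).measurable (mx (-s)).measurable mt.measurable (fun a b => by
          rw [← sqrt_sq_enn (g (Fin.cons s a) * g (Fin.cons (-s) b))]
          gcongr
          refine le_trans (le_of_eq ?_) (le_iSup _ ((1/2:ℝ) • (a - b)))
          simp only
          congr 4 <;> module)
      have e : ∫⁻ η, g (Fin.cons (-s) η) = ∫⁻ η, g (Fin.cons s η) := by
        rw [← lintegral_neg_eq_self]
        refine lintegral_congr fun η => ?_
        rw [← neg_cons, ge]
      rw [e] at this
      exact sq_le_enn this
    have FF : ∫⁻ z, f z ≤ ∫⁻ x, ∫⁻ t, ft f (x, t) := by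
      rw [lint_cons hf.measurable, lintegral_lintegral_swap]
      · exact lintegral_mono F1
      · exact (hf.measurable.comp measurable_cons).aemeasurable
    have GG : ∫⁻ z, g z ≤ ∫⁻ x, ∫⁻ t, gt g (x, t) := by
      rw [lint_cons hg.measurable]
      refine (lintegral_mono G1).trans_eq ?_
      rw [lintegral_lintegral_swap]
      exact (lg.measurable.comp measurable_swap).aemeasurable
    refine (mul_le_mul' FF GG).trans ?_
    have ftn : ∀ x t, ft f (x, -t) = ft f (x, t) := by
      intro x t
      unfold ft
      refine iSup_congr fun v => ?_
      simp only [sub_neg_eq_add, ← sub_eq_add_neg]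
      rw [mul_comm]
    have gtn : ∀ x t, gt g (x, -t) = gt g (x, t) := by
      intro x t
      unfold gt
      rw [← (Equiv.neg _).iSup_comp]
      refine iSup_congr fun v => ?_
      simp only [Equiv.neg_apply, sub_neg_eq_add, ← sub_eq_add_neg, neg_neg]
      rw [mul_comm]
    have ftx : ∀ x t, ft f (-x, t) = ft f (x, t) := by
      intro x t
      unfold ft
      rw [← (Equiv.neg _).iSup_comp]
      refine iSup_congr fun v => ?_
      simp only [Equiv.neg_apply]
      rw [← fe (Fin.cons (-v + t) (-x)), ← fe (Fin.cons (-v - t) (-x)), neg_cons, neg_cons, mul_comm]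
      congr 4 <;> simp <;> ring
    have gtx : ∀ x t, gt g (-x, t) = gt g (x, t) := by
      intro x t
      unfold gt
      refine iSup_congr fun v => ?_
      simp only
      rw [← ge (Fin.cons t (-x + v)), ← ge (Fin.cons (-t) (-x - v)), neg_cons, neg_cons, mul_comm]
      congr 4 <;> simp <;> abel
    have := ih (f := fun x => ∫⁻ t, ft f (x, t)) (g := fun x => ∫⁻ t, gt g (x, t)) (lsc_lintegral lf)
      (lsc_lintegral lg) (fun x => by simp only [ftx]) (fun x => by simp only [gtx])
      (A := A * ENNReal.ofReal Real.pi) (fun x ξ => by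
        have := half_line (p := fun t => ft f (x, t)) (q := fun t => gt g (ξ, t))
          (lf.measurable.comp measurable_prodMk_left) (lg.measurable.comp measurable_prodMk_left)
          (ftn x) (gtn ξ) (fun t s => H2 x t ξ s)
        refine this.trans_eq ?_
        ring)
    refine this.trans_eq ?_
    ring
end P6

section P7
variable {n : ℕ}
set_option linter.unusedSectionVars false

namespace SB
variable {K L B C D : Set (Euc n)}

lemma ZZ_pi (K : Set (Euc n)) (h : SB K) :
    ZZ K = ∫⁻ x : Fin n → ℝ, ENNReal.ofReal (Real.exp (-(gauge K (WithLp.toLp 2 x)) ^ 2)) := by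
  have h3 := (EuclideanSpace.volume_preserving_symm_measurableEquiv_toLp (Fin n)).symm
  have cg := h.g_cont
  exact (h3.lintegral_comp (f := fun x : Euc n => ENNReal.ofReal (Real.exp (-(gauge K x) ^ 2)))
    (by fun_prop)).symm

lemma upper (h : SB K) : ZZ K * ZZ (polarSet K) ≤ ENNReal.ofReal Real.pi ^ n := by
  rw [ZZ_pi K h, ZZ_pi _ h.polar]
  have cg := h.g_cont
  have ch := h.polar.g_cont
  have key := santalo n (f := fun x : Fin n → ℝ => ENNReal.ofReal (Real.exp (-(gauge K (WithLp.toLp 2 x)) ^ 2)))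
    (g := fun x : Fin n → ℝ => ENNReal.ofReal (Real.exp (-(gauge (polarSet K) (WithLp.toLp 2 x)) ^ 2)))
    (Continuous.lowerSemicontinuous (ENNReal.continuous_ofReal.comp (by fun_prop)))
    (Continuous.lowerSemicontinuous (ENNReal.continuous_ofReal.comp (by fun_prop)))
    (fun x => by simp only [WithLp.toLp_neg, h.g_neg]) (fun x => by simp only [WithLp.toLp_neg, h.polar.g_neg])
    (A := 1) (fun x y => by
      rw [one_mul, ← ENNReal.ofReal_mul (by positivity), ← Real.exp_add]
      gcongr
      have h1 := h.inner_le (WithLp.toLp 2 x) (WithLp.toLp 2 y)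
      rw [EuclideanSpace.inner_toLp_toLp] at h1
      have h2 : y ⬝ᵥ star x = x ⬝ᵥ y := by rw [dotProduct_comm]; simp
      rw [h2] at h1
      nlinarith [sq_nonneg (gauge K (WithLp.toLp 2 x) - gauge (polarSet K) (WithLp.toLp 2 y))])
  simpa using key

lemma ZZ_ne_zero (h : SB K) : ZZ K ≠ 0 := by
  intro h0
  have := h.lower
  rw [h0, zero_mul] at this
  have h2 : (0:ℝ) < (Real.pi / 8) ^ n := by positivity
  simp only [nonpos_iff_eq_zero, ENNReal.ofReal_eq_zero] at this
  linarith

lemma ZZ_polar_ne_zero (h : SB K) : ZZ (polarSet K) ≠ 0 := h.polar.ZZ_ne_zero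

lemma ZZ_ne_top (h : SB K) : ZZ K ≠ ⊤ := by
  intro h0
  have := h.upper
  rw [h0, ENNReal.top_mul h.ZZ_polar_ne_zero, top_le_iff] at this
  exact ENNReal.pow_ne_top ENNReal.ofReal_ne_top this

lemma vol_eq (h : SB K) (hn : 0 < n) :
    ZZ K = volume K * ENNReal.ofReal (Real.Gamma (n / 2 + 1)) := by
  haveI : Nonempty (Fin n) := ⟨⟨0, hn⟩⟩
  have cg := h.g_cont
  have e1 := MeasureTheory.measure_lt_one_eq_integral_div_gamma (volume : Measure (Euc n)) (g := gauge K)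
    gauge_zero h.g_neg h.g_add h.g_eq_zero (fun r x => (h.g_smul_abs r x).le) (p := 2) (by norm_num)
  have e2 := MeasureTheory.measure_le_eq_lt (volume : Measure (Euc n)) (g := gauge K)
    gauge_zero h.g_neg h.g_add h.g_eq_zero (fun r x => (h.g_smul_abs r x).le) 1
  have e3 : {x : Euc n | gauge K x ≤ 1} = K := by ext x; exact h.g_mem
  rw [e3] at e2
  rw [← e2] at e1
  simp only [Real.rpow_two, finrank_euclideanSpace_fin] at e1
  have hG : 0 < Real.Gamma ((n:ℝ) / 2 + 1) := Real.Gamma_pos_of_pos (by positivity)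
  have hi : Integrable (fun x : Euc n => Real.exp (-(gauge K x) ^ 2)) := by
    refine ⟨by fun_prop, ?_⟩
    rw [hasFiniteIntegral_iff_ofReal (.of_forall fun x => by positivity)]
    exact h.ZZ_ne_top.lt_top
  rw [e1, ← ENNReal.ofReal_mul (div_nonneg (integral_nonneg fun x => by positivity) hG.le),
    div_mul_cancel₀ _ hG.ne', ofReal_integral_eq_lintegral_ofReal hi (.of_forall fun x => by positivity)]
  rfl

lemma mahler (h : SB K) (hL : SB L) (hn : 0 < n) :
    volume K * volume (polarSet K) ≤ 8 ^ n * (volume L * volume (polarSet L)) := by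
  have hG : 0 < Real.Gamma ((n:ℝ) / 2 + 1) := Real.Gamma_pos_of_pos (by positivity)
  have h1 := h.upper
  have h2 := hL.lower
  rw [h.vol_eq hn, h.polar.vol_eq hn] at h1
  rw [hL.vol_eq hn, hL.polar.vol_eq hn] at h2
  set G := ENNReal.ofReal (Real.Gamma (n / 2 + 1)) with hGd
  have G0 : G ≠ 0 := by simp [hGd, hG]
  have Gt : G ≠ ⊤ := ENNReal.ofReal_ne_top
  have e : ENNReal.ofReal Real.pi ^ n = 8 ^ n * ENNReal.ofReal ((Real.pi / 8) ^ n) := by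
    rw [ENNReal.ofReal_pow (by positivity), ← mul_pow]
    congr 1
    rw [show (8:ℝ≥0∞) = ENNReal.ofReal 8 by simp, ← ENNReal.ofReal_mul (by norm_num)]
    congr 1; ring
  have h3 : G * G * (volume K * volume (polarSet K)) ≤ G * G * (8 ^ n * (volume L * volume (polarSet L))) := by
    calc _ = volume K * G * (volume (polarSet K) * G) := by ring
      _ ≤ _ := h1
      _ ≤ 8 ^ n * (volume L * G * (volume (polarSet L) * G)) := by rw [e]; gcongr
      _ = _ := by ring
  exact (ENNReal.mul_le_mul_iff_right (mul_ne_zero G0 G0) (ENNReal.mul_ne_top Gt Gt)).1 h3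

lemma of_body (h : IsConvexBody C) (hs : C = -C) : SB C := by
  obtain ⟨h1, h2, x, hx⟩ := h
  have sy : ∀ x ∈ C, -x ∈ C := fun x hx => by
    rw [hs] at hx; simpa using hx
  refine ⟨h1, h2, ?_, sy⟩
  have := h2.combo_interior_self_mem_interior hx (sy x (interior_subset hx)) (a := 1/2) (b := 1/2)
    (by norm_num) (by norm_num) (by norm_num)
  rw [smul_neg, add_neg_cancel] at this
  exact mem_interior_iff_mem_nhds.1 this

lemma zero_mem (h : SB K) : (0 : Euc n) ∈ K := mem_of_mem_nhds h.nhd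

lemma add (h : SB C) (hB : SB B) : SB (C + B) := by
  refine ⟨h.cpt.add hB.cpt, h.conv.add hB.conv, ?_, ?_⟩
  · refine Filter.mem_of_superset hB.nhd fun x hx => ?_
    exact mem_add.2 ⟨0, h.zero_mem, x, hx, zero_add x⟩
  · rintro _ ⟨x, hx, y, hy, rfl⟩
    exact mem_add.2 ⟨-x, h.symm x hx, -y, hB.symm y hy, (neg_add x y).symm⟩

lemma smul (h : SB D) {α : ℝ} (hα : 0 < α) : SB (α • D) := by
  refine ⟨h.cpt.smul α, h.conv.smul α, (set_smul_mem_nhds_zero_iff hα.ne').2 h.nhd, ?_⟩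
  rintro _ ⟨x, hx, rfl⟩
  exact mem_smul_set.2 ⟨-x, h.symm x hx, by simp⟩

lemma bipolar (h : SB K) : polarSet (polarSet K) = K := by
  apply Subset.antisymm
  · intro x hx
    by_contra hxK
    obtain ⟨f, u, hu1, hu2⟩ := geometric_hahn_banach_closed_point h.conv h.cpt.isClosed hxK
    have hu0 : 0 < u := by simpa using hu1 0 h.zero_mem
    set y := (InnerProductSpace.toDual ℝ (Euc n)).symm f with hy
    have hf : ∀ z, f z = ⟪y, z⟫ := fun z => by
      rw [hy, InnerProductSpace.toDual_symm_apply]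
    have h1 : u⁻¹ • y ∈ polarSet K := by
      intro z hz
      rw [real_inner_smul_right, real_inner_comm, ← hf, inv_mul_le_iff₀ hu0]
      have := hu1 z hz
      linarith
    have h2 := hx _ h1
    rw [real_inner_smul_left, ← hf, inv_mul_le_iff₀ hu0] at h2
    linarith
  · intro x hx y hy
    rw [real_inner_comm]
    exact hy x hx

lemma vol_ne_zero (h : SB K) : volume K ≠ 0 := (Measure.measure_pos_of_mem_nhds volume h.nhd).ne'
lemma vol_ne_top (h : SB K) : volume K ≠ ⊤ := h.cpt.measure_ne_top

lemma smul_conv (h : SB K) {x y : Euc n} (hx : x ∈ K) (hy : y ∈ K) : x - y ∈ (2:ℝ) • K := by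
  refine mem_smul_set.2 ⟨(1/2:ℝ) • x + (1/2:ℝ) • (-y), h.conv hx (h.symm y hy) (by norm_num) (by norm_num)
    (by norm_num), by module⟩

lemma half_conv (h : SB K) {x y : Euc n} (hx : x ∈ K) (hy : y ∈ K) : (1/2:ℝ) • x - (1/2:ℝ) • y ∈ K := by
  have := h.conv hx (h.symm y hy) (a := 1/2) (b := 1/2) (by norm_num) (by norm_num) (by norm_num)
  rwa [smul_neg, ← sub_eq_add_neg] at this

lemma vol_smul (K : Set (Euc n)) {α : ℝ} (hα : 0 ≤ α) : volume (α • K) = ENNReal.ofReal α ^ n * volume K := by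
  rw [Measure.addHaar_smul_of_nonneg _ hα, finrank_euclideanSpace_fin, ENNReal.ofReal_pow hα]

/-- covering by separated sets -/
lemma exists_cover (hC : SB C) (hB : SB B) : ∃ (m : ℕ) (x : Fin m → Euc n),
    C ⊆ ⋃ i, x i +ᵥ B ∧ (m : ℝ≥0∞) * volume B ≤ 2 ^ n * volume (C + B) := by
  set T : Set ℕ := {m | ∃ S : Finset (Euc n), S.card = m ∧ (∀ x ∈ S, x ∈ C) ∧
    ∀ x ∈ S, ∀ y ∈ S, x ≠ y → x - y ∉ B} with hT
  have bound : ∀ m ∈ T, (m : ℝ≥0∞) * volume B ≤ 2 ^ n * volume (C + B) := by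
    rintro m ⟨S, rfl, hSC, hS⟩
    have hd : (S : Set (Euc n)).PairwiseDisjoint (fun x => x +ᵥ (1/2:ℝ) • B) := by
      intro x hx y hy hxy
      rw [Function.onFun, Set.disjoint_left]
      rintro z hz1 hz2
      obtain ⟨_, ⟨b, hb, rfl⟩, rfl⟩ := hz1
      obtain ⟨_, ⟨b', hb', rfl⟩, e⟩ := hz2
      simp only [vadd_eq_add] at e
      refine hS x hx y hy hxy ?_
      have : x - y = (1/2:ℝ) • b' - (1/2:ℝ) • b := by
        rw [sub_eq_sub_iff_add_eq_add]
        rw [← e]; abel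
      rw [this]
      exact hB.half_conv hb' hb
    have hm : ∀ x ∈ S, MeasurableSet (x +ᵥ (1/2:ℝ) • B) := fun x _ =>
      ((hB.cpt.smul _).vadd x).measurableSet
    have h1 := measure_biUnion_finset (μ := volume) hd hm
    simp only [measure_vadd, Finset.sum_const, nsmul_eq_mul] at h1
    have h2 : (⋃ x ∈ S, x +ᵥ (1/2:ℝ) • B) ⊆ C + B := by
      refine iUnion₂_subset fun x hx => ?_
      rintro _ ⟨_, ⟨b, hb, rfl⟩, rfl⟩
      refine mem_add.2 ⟨x, hSC x hx, (1/2:ℝ) • b, ?_, rfl⟩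
      have := hB.half_conv hb hB.zero_mem
      simpa using this
    have h3 := measure_mono (μ := volume) h2
    rw [h1, vol_smul _ (by norm_num)] at h3
    calc (S.card : ℝ≥0∞) * volume B = 2 ^ n * (S.card * (ENNReal.ofReal (1/2) ^ n * volume B)) := by
          have : (2:ℝ≥0∞) ^ n * ENNReal.ofReal (1/2) ^ n = 1 := by
            rw [← mul_pow, show (2:ℝ≥0∞) = ENNReal.ofReal 2 by simp, ← ENNReal.ofReal_mul (by norm_num)]
            simp
          calc _ = (2:ℝ≥0∞) ^ n * ENNReal.ofReal (1/2) ^ n * (S.card * volume B) := by rw [this, one_mul]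
            _ = _ := by ring
      _ ≤ _ := by gcongr
  have hbdd : BddAbove T := by
    have ht : 2 ^ n * volume (C + B) / volume B ≠ ⊤ :=
      ENNReal.div_ne_top (ENNReal.mul_ne_top (by simp) (hC.add hB).vol_ne_top) hB.vol_ne_zero
    obtain ⟨N, hN⟩ := ENNReal.exists_nat_gt ht
    refine ⟨N, fun m hm => ?_⟩
    have := bound m hm
    rw [← ENNReal.le_div_iff_mul_le (Or.inl hB.vol_ne_zero) (Or.inl hB.vol_ne_top)] at this
    exact_mod_cast (this.trans hN.le)
  have hne : T.Nonempty := ⟨0, ∅, by simp⟩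
  have hmem := Nat.sSup_mem hne hbdd
  obtain ⟨S, hSc, hSC, hS⟩ := hmem
  refine ⟨S.card, fun i => (S.equivFin.symm i : Euc n), ?_, ?_⟩
  · intro z hz
    by_contra hcon
    simp only [mem_iUnion, not_exists] at hcon
    have hz2 : ∀ x ∈ S, z - x ∉ B := by
      intro x hx hb
      refine hcon (S.equivFin ⟨x, hx⟩) ?_
      simp only [Equiv.symm_apply_apply]
      exact mem_vadd_set.2 ⟨z - x, hb, by simp⟩
    have hzS : z ∉ S := fun h => hz2 z h (by simpa using hB.zero_mem)
    classical
    have : S.card + 1 ∈ T := by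
      refine ⟨insert z S, Finset.card_insert_of_notMem hzS, ?_, ?_⟩
      · intro x hx
        rcases Finset.mem_insert.1 hx with rfl | hx
        · exact hz
        · exact hSC x hx
      · intro x hx y hy hxy
        rcases Finset.mem_insert.1 hx with rfl | hx1 <;> rcases Finset.mem_insert.1 hy with rfl | hy1
        · exact absurd rfl hxy
        · exact hz2 y hy1
        · intro hb
          refine hz2 x hx1 ?_
          have := hB.symm _ hb
          rwa [neg_sub] at this
        · exact hS x hx1 y hy1 hxy
    have := le_csSup hbdd this
    omega
  · exact bound _ ⟨S, rfl, hSC, hS⟩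

lemma cover_vol {E F : Set (Euc n)} (hE : SB E) (hF : SB F) {m : ℕ} (x : Fin m → Euc n)
    (h : E ⊆ ⋃ i, x i +ᵥ F) : volume E ≤ m * (2 ^ n * volume (F ∩ E)) := by
  have h1 : E ⊆ ⋃ i, ((x i +ᵥ F) ∩ E) := by
    rw [← iUnion_inter]; exact subset_inter h Subset.rfl
  refine (measure_mono h1).trans ((measure_iUnion_le _).trans ?_)
  rw [tsum_fintype]
  have : ∀ i : Fin m, volume ((x i +ᵥ F) ∩ E) ≤ 2 ^ n * volume (F ∩ E) := by
    intro i
    rcases ((x i +ᵥ F) ∩ E).eq_empty_or_nonempty with h0 | ⟨z, hz1, hz2⟩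
    · simp [h0]
    have hs : ((x i +ᵥ F) ∩ E) ⊆ z +ᵥ ((2:ℝ) • (F ∩ E)) := by
      rintro w ⟨hw1, hw2⟩
      refine mem_vadd_set.2 ⟨w - z, ?_, by simp⟩
      rw [smul_set_inter₀ (by norm_num)]
      refine ⟨?_, hE.smul_conv hw2 hz2⟩
      obtain ⟨a, ha, rfl⟩ := mem_vadd_set.1 hw1
      obtain ⟨b, hb, rfl⟩ := mem_vadd_set.1 hz1
      simpa using hF.smul_conv ha hb
    refine (measure_mono hs).trans_eq ?_
    rw [measure_vadd, vol_smul _ (by norm_num)]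
    simp
  refine (Finset.sum_le_sum fun i _ => this i).trans_eq ?_
  simp

lemma inter (hC : SB C) (hB : SB B) : SB (C ∩ B) :=
  ⟨hC.cpt.inter hB.cpt, hC.conv.inter hB.conv, Filter.inter_mem hC.nhd hB.nhd,
    fun x hx => ⟨hC.symm x hx.1, hB.symm x hx.2⟩⟩

lemma main (hn : 0 < n) (hC : SB C) (hD : SB D) {α : ℝ} (hα : 0 < α) :
    (transCov D C α : ℝ≥0∞) ≤ 64 ^ n * transCov (polarSet C) (polarSet D) α := by
  have hB := hD.smul hα
  set B := α • D with hBd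
  obtain ⟨N, x, hcov, hN⟩ := hC.exists_cover hB
  have hle : transCov D C α ≤ N := Nat.sInf_le ⟨x, hcov⟩
  obtain ⟨m', x', hcov', -⟩ := hD.polar.exists_cover (hC.polar.smul hα)
  have hmem := Nat.sInf_mem (s := {m : ℕ | ∃ x : Fin m → Euc n, polarSet D ⊆ ⋃ i, x i +ᵥ α • polarSet C})
    ⟨m', x', hcov'⟩
  change transCov (polarSet C) (polarSet D) α ∈ _ at hmem
  set m := transCov (polarSet C) (polarSet D) α
  obtain ⟨y, hy⟩ := hmem
  have hc2 : polarSet B ⊆ ⋃ i, (α⁻¹ • y i) +ᵥ polarSet C := by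
    intro z hz
    have h1 : α • z ∈ polarSet D := by
      intro w hw
      rw [real_inner_smul_right, ← real_inner_smul_left]
      exact hz _ (smul_mem_smul_set hw)
    obtain ⟨i, hi⟩ := mem_iUnion.1 (hy h1)
    obtain ⟨_, ⟨b, hb, rfl⟩, e⟩ := mem_vadd_set.1 hi
    refine mem_iUnion.2 ⟨i, mem_vadd_set.2 ⟨b, hb, ?_⟩⟩
    simp only [vadd_eq_add] at e ⊢
    have := congrArg (fun v => α⁻¹ • v) e
    simpa [smul_smul, hα.ne'] using this
  have v1 := cover_vol hB.polar hC.polar _ hc2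
  have v2 := (hC.add hB).mahler hB hn
  have v3 : volume (polarSet C ∩ polarSet B) ≤ 2 ^ n * volume (polarSet (C + B)) := by
    have hs : polarSet C ∩ polarSet B ⊆ (2:ℝ) • polarSet (C + B) := by
      rintro z ⟨hz1, hz2⟩
      refine mem_smul_set.2 ⟨(1/2:ℝ) • z, ?_, by module⟩
      rintro _ ⟨a, ha, b, hb, rfl⟩
      have := hz1 a ha
      have := hz2 b hb
      simp only
      rw [real_inner_smul_right, inner_add_left]
      linarith
    refine (measure_mono hs).trans_eq ?_
    rw [vol_smul _ (by norm_num)]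
    simp
  set W := volume (polarSet C ∩ polarSet B)
  have W0 : W ≠ 0 := (hC.polar.inter hB.polar).vol_ne_zero
  have Wt : W ≠ ⊤ := (hC.polar.inter hB.polar).vol_ne_top
  have fin : volume B * W * N ≤ volume B * W * (64 ^ n * m) := by
    calc volume B * W * N = (N * volume B) * W := by ring
      _ ≤ (2 ^ n * volume (C + B)) * (2 ^ n * volume (polarSet (C + B))) := mul_le_mul' hN v3
      _ = 2 ^ n * 2 ^ n * (volume (C + B) * volume (polarSet (C + B))) := by ring
      _ ≤ 2 ^ n * 2 ^ n * (8 ^ n * (volume B * volume (polarSet B))) := by gcongr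
      _ ≤ 2 ^ n * 2 ^ n * (8 ^ n * (volume B * (m * (2 ^ n * W)))) := by gcongr
      _ = volume B * W * ((2 * 2 * 8 * 2) ^ n * m) := by rw [mul_pow, mul_pow, mul_pow]; ring
      _ = _ := by norm_num
  have := (ENNReal.mul_le_mul_iff_right (mul_ne_zero hB.vol_ne_zero W0)
    (ENNReal.mul_ne_top hB.vol_ne_top Wt)).1 fin
  exact le_trans (by exact_mod_cast hle) this

lemma main' (hn : 0 < n) (hC : SB C) (hD : SB D) {α : ℝ} (hα : 0 < α) :
    (transCov D C α : ℝ) ≤ 64 ^ n * transCov (polarSet C) (polarSet D) α := by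
  have := main hn hC hD hα
  exact_mod_cast this
end SB
end P7

/-- Duality for volumetric coverings by translates (König–Milman). -/
theorem mink_cover_duality :
    ∃ c : ℝ, 1 ≤ c ∧ ∀ d : ℕ, 2 ≤ d →
      ∀ C D : Set (Euc d), IsConvexBody C → IsConvexBody D →
        C = -C → D = -D →
        ∀ α : ℝ, 0 < α →
          (c ^ d)⁻¹ * (transCov (polarSet C) (polarSet D) α : ℝ) ≤
              (transCov D C α : ℝ) ∧
          (transCov D C α : ℝ) ≤
              c ^ d * (transCov (polarSet C) (polarSet D) α : ℝ) := by
  refine ⟨64, by norm_num, fun d hd C D hC hD hCs hDs α hα => ?_⟩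
  have sC := SB.of_body hC hCs
  have sD := SB.of_body hD hDs
  have hn : 0 < d := by omega
  refine ⟨?_, SB.main' hn sC sD hα⟩
  have h := SB.main' hn sD.polar sC.polar hα
  rw [sC.bipolar, sD.bipolar] at h
  rw [inv_mul_le_iff₀ (by positivity)]
  exact h
end
end

section
/- There exists an absolute constant c ≥ 1 such that for every dimension d ≥ 2, all convex bodies G, K ⊆ ℝ^d with 0 ∈ int(G) and G ⊆ int(K), every α with 0 < α ≤ 1, and every set U ⊆ K°, with G₊ := {x ∈ int(K) : inf_{g∈G} d_H^K(x,g) ≤ α} the Hilbert α-expansion of G in K, one has N_{(G₊)°}(U, α) ≤ c^{d} · N_{G°}(U, α), where N_A(U,α) denotes the Hilbert covering number of U with respect to the body A. -/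
open Set MeasureTheory Metric
open scoped Pointwise RealInnerProductSpace ENNReal

noncomputable section

theorem shift_nhds {d : ℕ} {A : Set (Euc d)} {x : Euc d} (hx : x ∈ interior A) :
    (fun k => k - x) '' A ∈ nhds (0 : Euc d) := by
  have h : A ∈ nhds x := mem_interior_iff_mem_nhds.1 hx
  have h2 := (Homeomorph.subRight x).isOpenMap.image_mem_nhds h
  simpa using h2

theorem shift_absorbent {d : ℕ} {A : Set (Euc d)} {x : Euc d} (hx : x ∈ interior A) :
    Absorbent ℝ ((fun k => k - x) '' A) :=
  absorbent_nhds_zero (shift_nhds hx)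

theorem funk_le {d : ℕ} {A : Set (Euc d)} {x z w : Euc d} (hx : x ∈ interior A)
    (hw : ∀ k ∈ A, ⟪k, w⟫ ≤ 1) :
    (1 - gauge ((fun k => k - x) '' A) (z - x)) * (1 - ⟪x, w⟫) ≤ 1 - ⟪z, w⟫ := by
  have hx1 : ⟪x, w⟫ ≤ 1 := hw x (interior_subset hx)
  have key : ∀ b > gauge ((fun k => k - x) '' A) (z - x),
      (1 - b) * (1 - ⟪x, w⟫) ≤ 1 - ⟪z, w⟫ := by
    intro b hb
    obtain ⟨b', hb0, hb', hmem⟩ := exists_lt_of_gauge_lt (shift_absorbent hx) hb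
    obtain ⟨v, ⟨k, hk, rfl⟩, hv⟩ := hmem
    have hk1 := hw k hk
    have hz : z = x + b' • (k - x) := by
      have : b' • (k - x) = z - x := hv
      rw [this]; abel
    have : ⟪z, w⟫ = ⟪x, w⟫ + b' * (⟪k, w⟫ - ⟪x, w⟫) := by
      rw [hz, inner_add_left, real_inner_smul_left, inner_sub_left]
    rw [this]
    nlinarith
  refine le_of_forall_pos_le_add ?_
  intro e he
  have h1 := key (gauge ((fun k => k - x) '' A) (z - x) + e / (1 - ⟪x, w⟫ + 1))
    (by have : 0 < e / (1 - ⟪x, w⟫ + 1) := div_pos he (by linarith)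
        linarith)
  have h2 : e / (1 - ⟪x, w⟫ + 1) * (1 - ⟪x, w⟫) ≤ e := by
    rw [div_mul_eq_mul_div, div_le_iff₀ (by linarith)]
    nlinarith
  nlinarith

theorem gauge_shift_lt_one {d : ℕ} {A : Set (Euc d)} {x z : Euc d} (hz : z ∈ interior A) :
    gauge ((fun k => k - x) '' A) (z - x) < 1 := by
  apply interior_subset_gauge_lt_one
  have := (Homeomorph.subRight x).image_interior A
  have h3 : z - x ∈ (Homeomorph.subRight x) '' interior A := ⟨z, hz, rfl⟩
  rw [this] at h3
  exact h3

theorem exp_le_of_dist {d : ℕ} {A : Set (Euc d)} {x z : Euc d} {r : ℝ}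
    (hx : x ∈ interior A) (hz : z ∈ interior A) (h : hilbertDist A x z ≤ r) :
    Real.exp (-(2 * r)) ≤ 1 - gauge ((fun k => k - x) '' A) (z - x) ∧
    Real.exp (-(2 * r)) ≤ 1 - gauge ((fun k => k - z) '' A) (x - z) := by
  have h1 := gauge_shift_lt_one (x := x) hz
  have h2 := gauge_shift_lt_one (x := z) hx
  have h3 := gauge_nonneg (s := (fun k => k - x) '' A) (z - x)
  have h4 := gauge_nonneg (s := (fun k => k - z) '' A) (x - z)
  unfold hilbertDist at h
  set p := gauge ((fun k => k - x) '' A) (z - x)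
  set q := gauge ((fun k => k - z) '' A) (x - z)
  have h5 : Real.exp (-(2 * r)) ≤ (1 - p) * (1 - q) := by
    rw [← Real.le_log_iff_exp_le (by nlinarith)]
    linarith
  constructor <;> nlinarith

/-- Both functional comparisons from a bound on the Hilbert distance. -/
theorem compare_of_dist {d : ℕ} {A : Set (Euc d)} {x z w : Euc d} {r : ℝ}
    (hx : x ∈ interior A) (hz : z ∈ interior A) (h : hilbertDist A x z ≤ r)
    (hw : ∀ k ∈ A, ⟪k, w⟫ ≤ 1) :
    (1 - ⟪x, w⟫) ≤ Real.exp (2 * r) * (1 - ⟪z, w⟫) ∧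
    (1 - ⟪z, w⟫) ≤ Real.exp (2 * r) * (1 - ⟪x, w⟫) := by
  obtain ⟨h1, h2⟩ := exp_le_of_dist hx hz h
  have h3 := funk_le (z := z) hx hw
  have h4 := funk_le (z := x) hz hw
  have hx1 := hw x (interior_subset hx)
  have hz1 := hw z (interior_subset hz)
  have he : Real.exp (2 * r) * Real.exp (-(2 * r)) = 1 := by
    rw [← Real.exp_add]; simp
  have hp := Real.exp_pos (2 * r)
  constructor
  · have : Real.exp (-(2 * r)) * (1 - ⟪x, w⟫) ≤ 1 - ⟪z, w⟫ :=
      (mul_le_mul_of_nonneg_right h1 (by linarith)).trans h3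
    calc (1 - ⟪x, w⟫) = Real.exp (2 * r) * (Real.exp (-(2 * r)) * (1 - ⟪x, w⟫)) := by
          rw [← mul_assoc, he, one_mul]
      _ ≤ _ := mul_le_mul_of_nonneg_left this hp.le
  · have : Real.exp (-(2 * r)) * (1 - ⟪z, w⟫) ≤ 1 - ⟪x, w⟫ :=
      (mul_le_mul_of_nonneg_right h2 (by linarith)).trans h4
    calc (1 - ⟪z, w⟫) = Real.exp (2 * r) * (Real.exp (-(2 * r)) * (1 - ⟪z, w⟫)) := by
          rw [← mul_assoc, he, one_mul]
      _ ≤ _ := mul_le_mul_of_nonneg_left this hp.le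

theorem gauge_polar_le {d : ℕ} {S : Set (Euc d)} {y z : Euc d} {t : ℝ}
    (ht1 : t ≤ 1) (hy : y ∈ polarSet S)
    (h : ∀ x ∈ S, t * (1 - ⟪x, y⟫) ≤ 1 - ⟪x, z⟫) :
    gauge ((fun k => k - y) '' polarSet S) (z - y) ≤ 1 - t := by
  refine le_of_forall_pos_le_add ?_
  intro e he
  have hb : 0 < 1 - t + e := by linarith
  apply gauge_le_of_mem hb.le
  refine ⟨(1 - t + e)⁻¹ • (z - y), ⟨y + (1 - t + e)⁻¹ • (z - y), ?_, by simp⟩, ?_⟩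
  · intro x hx
    rw [inner_add_right, real_inner_smul_right, inner_sub_right]
    have h1 := h x hx
    have h2 := hy x hx
    have : (1 - t + e)⁻¹ * (⟪x, z⟫ - ⟪x, y⟫) ≤ 1 - ⟪x, y⟫ := by
      rw [inv_mul_le_iff₀ hb]
      nlinarith
    linarith
  · simp [smul_smul, hb.ne']

theorem dist_le_of_compare {d : ℕ} {S : Set (Euc d)} {y z : Euc d} {r : ℝ} (hr : 0 ≤ r)
    (hy : y ∈ polarSet S) (hz : z ∈ polarSet S)
    (h1 : ∀ x ∈ S, Real.exp (-r) * (1 - ⟪x, y⟫) ≤ 1 - ⟪x, z⟫)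
    (h2 : ∀ x ∈ S, Real.exp (-r) * (1 - ⟪x, z⟫) ≤ 1 - ⟪x, y⟫) :
    hilbertDist (polarSet S) y z ≤ r := by
  have ht : Real.exp (-r) ≤ 1 := Real.exp_le_one_iff.2 (by linarith)
  have g1 := gauge_polar_le ht hy h1
  have g2 := gauge_polar_le ht hz h2
  have hp := Real.exp_pos (-r)
  unfold hilbertDist
  set p := gauge ((fun k => k - y) '' polarSet S) (z - y)
  set q := gauge ((fun k => k - z) '' polarSet S) (y - z)
  have h5 : Real.exp (-(2 * r)) ≤ (1 - p) * (1 - q) := by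
    have : Real.exp (-(2 * r)) = Real.exp (-r) * Real.exp (-r) := by
      rw [← Real.exp_add]; ring_nf
    rw [this]
    apply mul_le_mul <;> linarith
  have h6 := (Real.le_log_iff_exp_le ((Real.exp_pos _).trans_le h5)).2 h5
  linarith

theorem ball_mono {d : ℕ} {A B : Set (Euc d)} (hAB : A ⊆ B) {x : Euc d} {r : ℝ}
    (hx : x ∈ interior A) : hilbertBall A x r ⊆ hilbertBall B x r := by
  rintro z ⟨hz, h⟩
  refine ⟨interior_mono hAB hz, le_trans ?_ h⟩
  have a1 := gauge_mono (shift_absorbent hx) (image_mono (f := fun k => k - x) hAB) (z - x)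
  have a2 := gauge_mono (shift_absorbent hz) (image_mono (f := fun k => k - z) hAB) (x - z)
  have h1 := gauge_shift_lt_one (x := x) hz
  have h2 := gauge_shift_lt_one (x := z) hx
  unfold hilbertDist
  have := Real.log_le_log (mul_pos (sub_pos.2 h1) (sub_pos.2 h2))
    (mul_le_mul (sub_le_sub_left a1 1) (sub_le_sub_left a2 1) (sub_pos.2 h2).le
      (by linarith))
  linarith

theorem polar_anti {d : ℕ} {S T : Set (Euc d)} (h : S ⊆ T) : polarSet T ⊆ polarSet S :=
  fun _ hy x hx => hy x (h hx)

theorem delta_of_interior {d : ℕ} {S : Set (Euc d)} {y : Euc d}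
    (hy : y ∈ interior (polarSet S)) : ∃ δ > 0, ∀ x ∈ S, δ ≤ 1 - ⟪x, y⟫ := by
  have hn : polarSet S ∈ nhds y := mem_interior_iff_mem_nhds.1 hy
  have hc : Filter.Tendsto (fun t : ℝ => (1 + t) • y) (nhdsWithin 0 (Ioi 0)) (nhds y) := by
    have : Continuous (fun t : ℝ => (1 + t) • y) := by fun_prop
    have h := this.tendsto 0
    simp only [add_zero, one_smul] at h
    exact h.mono_left nhdsWithin_le_nhds
  obtain ⟨t, ht, ht0⟩ := ((hc.eventually hn).and self_mem_nhdsWithin).exists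
  have ht0 : 0 < t := ht0
  refine ⟨1 - 1 / (1 + t), ?_, ?_⟩
  · have : 1 / (1 + t) < 1 := by rw [div_lt_one (by linarith)]; linarith
    linarith
  · intro x hx
    have h := ht x hx
    rw [real_inner_smul_right] at h
    have : ⟪x, y⟫ ≤ 1 / (1 + t) := by
      rw [le_div_iff₀ (by linarith)]; linarith
    linarith

theorem interior_of_delta {d : ℕ} {S : Set (Euc d)} {y : Euc d} {R δ : ℝ}
    (hR : 0 < R) (hS : ∀ x ∈ S, ‖x‖ ≤ R) (hδ : 0 < δ) (h : ∀ x ∈ S, δ ≤ 1 - ⟪x, y⟫) :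
    y ∈ interior (polarSet S) := by
  rw [mem_interior_iff_mem_nhds, Metric.mem_nhds_iff]
  refine ⟨δ / R, div_pos hδ hR, ?_⟩
  intro z hz x hx
  have h1 := h x hx
  have h2 : ⟪x, z - y⟫ ≤ ‖x‖ * ‖z - y‖ := real_inner_le_norm _ _
  rw [mem_ball_iff_norm] at hz
  have h3 : ‖x‖ * ‖z - y‖ ≤ R * (δ / R) :=
    mul_le_mul (hS x hx) hz.le (norm_nonneg _) hR.le
  rw [mul_div_cancel₀ _ hR.ne'] at h3
  rw [inner_sub_right] at h2
  linarith

/-- Volumetric packing bound. -/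
theorem packing {d : ℕ} {M : Set (Euc d)} (hc : Convex ℝ M) (hcl : IsClosed M)
    (hsym : ∀ v ∈ M, -v ∈ M) (hb : Bornology.IsBounded M) (hi : (interior M).Nonempty)
    {a b : ℝ} (ha : 0 < a) (hb0 : 0 < b) {y : Euc d} (P : Finset (Euc d))
    (hP : ∀ z ∈ P, z - y ∈ b • M)
    (hsep : ∀ z ∈ P, ∀ z' ∈ P, z ≠ z' → z' - z ∉ a • M) :
    (P.card : ℝ) ≤ (1 + 2 * b / a) ^ d := by
  have hpos : 0 < volume M := Measure.measure_pos_of_nonempty_interior _ hi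
  have hfin : volume M ≠ ⊤ := hb.measure_lt_top.ne
  have hdisj : (P : Set (Euc d)).PairwiseDisjoint (fun z => z +ᵥ (a / 2) • M) := by
    intro z hz z' hz' hne
    rw [Function.onFun, Set.disjoint_left]
    rintro w ⟨u, ⟨m, hm, rfl⟩, rfl⟩ ⟨u', ⟨m', hm', rfl⟩, heq⟩
    apply hsep z hz z' hz' hne
    refine ⟨(1 / 2 : ℝ) • m + (1 / 2 : ℝ) • (-m'),
      hc hm (hsym _ hm') (by norm_num) (by norm_num) (by norm_num), ?_⟩
    have heq : z' + (a / 2) • m' = z + (a / 2) • m := heq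
    have : z' - z = (a / 2) • m - (a / 2) • m' := by
      rw [sub_eq_sub_iff_add_eq_add, heq, add_comm]
    rw [this]
    simp only []
    module
  have hmeas : ∀ z ∈ P, MeasurableSet (z +ᵥ (a / 2) • M) := fun z _ =>
    ((hcl.smul₀ (a / 2)).measurableSet).const_vadd z
  have hsub : (⋃ z ∈ P, (z +ᵥ (a / 2) • M)) ⊆ y +ᵥ (b + a / 2) • M := by
    intro w hw
    simp only [mem_iUnion] at hw
    obtain ⟨z, hz, u, hu, rfl⟩ := hw
    rw [hc.add_smul hb0.le (by linarith)]
    refine ⟨(z - y) + u, Set.add_mem_add (hP z hz) hu, ?_⟩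
    simp only [vadd_eq_add]; abel
  have hvol := measure_mono (μ := volume) hsub
  rw [measure_biUnion_finset hdisj hmeas] at hvol
  simp only [measure_vadd, Measure.addHaar_smul, finrank_euclideanSpace_fin] at hvol
  rw [Finset.sum_const, nsmul_eq_mul, ← mul_assoc,
    ENNReal.mul_le_mul_iff_left hpos.ne' hfin] at hvol
  rw [abs_of_pos (by positivity), abs_of_pos (by positivity), ← ENNReal.ofReal_natCast,
    ← ENNReal.ofReal_mul (by positivity), ENNReal.ofReal_le_ofReal_iff (by positivity)] at hvol
  have : 1 + 2 * b / a = (b + a / 2) / (a / 2) := by field_simp; ring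
  rw [this, div_pow, le_div_iff₀ (by positivity)]
  exact hvol

/-- A maximal separated set covers. -/
theorem exists_net {E : Type*} (rel : E → E → Prop) (hsymm : ∀ x y, rel x y → rel y x)
    (T : Set E) (B : ℝ)
    (hB : ∀ P : Finset E, (∀ z ∈ P, z ∈ T) → (∀ z ∈ P, ∀ z' ∈ P, z ≠ z' → ¬ rel z z') →
      (P.card : ℝ) ≤ B) (hrefl : ∀ x, rel x x) :
    ∃ P : Finset E, (∀ z ∈ P, z ∈ T) ∧ (P.card : ℝ) ≤ B ∧ ∀ z ∈ T, ∃ p ∈ P, rel p z := by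
  classical
  let Q : ℕ → Prop := fun n => ∃ P : Finset E, (∀ z ∈ P, z ∈ T) ∧
    (∀ z ∈ P, ∀ z' ∈ P, z ≠ z' → ¬ rel z z') ∧ P.card = n
  have hQ0 : Q 0 := ⟨∅, by simp, by simp, by simp⟩
  have hbd : ∀ n, Q n → n ≤ ⌊B⌋₊ := by
    rintro n ⟨P, h1, h2, rfl⟩
    exact Nat.le_floor (hB P h1 h2)
  obtain ⟨P, h1, h2, h3⟩ := Nat.findGreatest_spec (P := Q) (Nat.zero_le ⌊B⌋₊) hQ0
  refine ⟨P, h1, hB P h1 h2, ?_⟩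
  intro z hz
  by_contra hcon
  push Not at hcon
  have hzP : z ∉ P := fun h => hcon z h (hrefl z)
  have hQ : Q (P.card + 1) := by
    refine ⟨insert z P, ?_, ?_, Finset.card_insert_of_notMem hzP⟩
    · intro w hw
      rcases Finset.mem_insert.1 hw with rfl | hw
      · exact hz
      · exact h1 w hw
    · intro w hw w' hw' hne
      rcases Finset.mem_insert.1 hw with rfl | hw <;>
        rcases Finset.mem_insert.1 hw' with rfl | hw'
      · exact absurd rfl hne
      · exact fun h => hcon w' hw' (hsymm _ _ h)
      · exact hcon w (by assumption)
      · exact h2 w hw w' hw' hne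
  have := Nat.le_findGreatest (hbd _ hQ) hQ
  omega

/-- Local doubling: a set of points whose functionals are comparable is covered by few balls. -/
theorem local_cover {d : ℕ} {S T : Set (Euc d)} {R ρ L α : ℝ} (hR : 0 < R)
    (hS : ∀ x ∈ S, ‖x‖ ≤ R) (hρ : 0 < ρ) (hSρ : closedBall 0 ρ ⊆ S)
    (hL : 1 ≤ L) (hα : 0 < α) (hα1 : α ≤ 1)
    (hT : T ⊆ interior (polarSet S))
    (hcmp : ∀ y ∈ T, ∀ z ∈ T, ∀ x ∈ S, 1 - ⟪x, z⟫ ≤ L * (1 - ⟪x, y⟫))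
    (hcmp' : ∀ y ∈ T, ∀ z ∈ T, ∀ x ∈ S, 1 - ⟪x, z⟫ ≤ (1 + 12 * L * α) * (1 - ⟪x, y⟫)) :
    ∃ P : Finset (Euc d), (∀ z ∈ P, z ∈ T) ∧ (P.card : ℝ) ≤ (1 + 48 * L ^ 2) ^ d ∧
      ∀ z ∈ T, ∃ p ∈ P, z ∈ hilbertBall (polarSet S) p α := by
  rcases T.eq_empty_or_nonempty with rfl | ⟨y, hy⟩
  · exact ⟨∅, by simp, by simp; positivity, by simp⟩
  let M : Set (Euc d) := {v | ∀ x ∈ S, |⟪x, v⟫| ≤ 1 - ⟪x, y⟫}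
  obtain ⟨δ, hδ, hyδ⟩ := delta_of_interior (hT hy)
  have hM : ∀ c : ℝ, 0 < c → ∀ v : Euc d,
      v ∈ c • M ↔ ∀ x ∈ S, |⟪x, v⟫| ≤ c * (1 - ⟪x, y⟫) := by
    intro c hc v
    rw [Set.mem_smul_set_iff_inv_smul_mem₀ hc.ne']
    refine forall₂_congr fun x hx => ?_
    rw [real_inner_smul_right, abs_mul, abs_of_pos (inv_pos.2 hc), inv_mul_le_iff₀ hc]
  have hsym : ∀ v ∈ M, -v ∈ M := by
    intro v hv x hx
    rw [inner_neg_right, abs_neg]; exact hv x hx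
  have hconv : Convex ℝ M := by
    intro u hu v hv p q hp hq hpq x hx
    rw [inner_add_right, real_inner_smul_right, real_inner_smul_right]
    calc |p * ⟪x, u⟫ + q * ⟪x, v⟫| ≤ |p * ⟪x, u⟫| + |q * ⟪x, v⟫| := abs_add_le _ _
      _ = p * |⟪x, u⟫| + q * |⟪x, v⟫| := by rw [abs_mul, abs_mul, abs_of_nonneg hp, abs_of_nonneg hq]
      _ ≤ p * (1 - ⟪x, y⟫) + q * (1 - ⟪x, y⟫) := by
        gcongr
        · exact hu x hx
        · exact hv x hx
      _ = 1 - ⟪x, y⟫ := by rw [← add_mul, hpq, one_mul]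
  have hcl : IsClosed M := by
    have : M = ⋂ x ∈ S, {v | |⟪x, v⟫| ≤ 1 - ⟪x, y⟫} := by
      ext v; simp [M]
    rw [this]
    refine isClosed_biInter fun x _ => isClosed_le ?_ continuous_const
    fun_prop
  have hbdd : Bornology.IsBounded M := by
    refine (Metric.isBounded_closedBall (x := (0 : Euc d)) (r := (1 + R * ‖y‖) / ρ)).subset ?_
    intro v hv
    rw [mem_closedBall_zero_iff, le_div_iff₀ hρ]
    rcases eq_or_ne v 0 with rfl | hv0
    · simp; positivity
    have hn : 0 < ‖v‖ := norm_pos_iff.2 hv0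
    have hxS : (ρ / ‖v‖) • v ∈ S := by
      apply hSρ
      rw [mem_closedBall_zero_iff, norm_smul, Real.norm_of_nonneg (by positivity)]
      field_simp; exact le_rfl
    have h1 := hv _ hxS
    have h2 := (le_abs_self _).trans h1
    rw [real_inner_smul_left, real_inner_self_eq_norm_sq] at h2
    have h3 : -⟪(ρ / ‖v‖) • v, y⟫ ≤ R * ‖y‖ := by
      refine (neg_le_abs _).trans ((abs_real_inner_le_norm _ _).trans ?_)
      exact mul_le_mul_of_nonneg_right (hS _ hxS) (norm_nonneg _)
    have h4 : ρ / ‖v‖ * ‖v‖ ^ 2 = ‖v‖ * ρ := by field_simp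
    linarith
  have hint : (interior M).Nonempty := by
    refine ⟨0, ?_⟩
    rw [mem_interior_iff_mem_nhds, Metric.mem_nhds_iff]
    refine ⟨δ / R, div_pos hδ hR, ?_⟩
    intro v hv x hx
    rw [mem_ball_zero_iff] at hv
    have h3 : ‖x‖ * ‖v‖ ≤ R * (δ / R) :=
      mul_le_mul (hS x hx) hv.le (norm_nonneg _) hR.le
    rw [mul_div_cancel₀ _ hR.ne'] at h3
    linarith [abs_real_inner_le_norm x v, hyδ x hx]
  have hL0 : 0 < L := by linarith
  have ha : 0 < α / (2 * L) := by positivity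
  have hb : 0 < 12 * L * α := by positivity
  obtain ⟨P, hPT, hPc, hPcov⟩ := exists_net (fun z z' => z' - z ∈ (α / (2 * L)) • M)
    (by
      intro u v huv
      simp only [hM _ ha] at huv ⊢
      intro x hx
      rw [← neg_sub, inner_neg_right, abs_neg]; exact huv x hx) T ((1 + 48 * L ^ 2) ^ d)
    (by
      intro P hPT hsep
      have := packing hconv hcl hsym hbdd hint ha hb (y := y) P
        (by
          intro z hz
          rw [hM _ hb]
          intro x hx
          have h1 := hcmp' y hy z (hPT z hz) x hx
          have h2 := hcmp' z (hPT z hz) y hy x hx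
          have h3 := hcmp y hy z (hPT z hz) x hx
          have h4 := hyδ x hx
          have h5 : 0 ≤ 1 - ⟪x, z⟫ := by
            have := interior_subset (hT (hPT z hz)) x hx
            linarith
          rw [inner_sub_right, abs_le]
          constructor
          · linarith
          · rcases le_total (1 - ⟪x, z⟫) (1 - ⟪x, y⟫) with h | h
            · linarith [mul_le_mul_of_nonneg_left h hb.le]
            · have : 0 ≤ 12 * L * α * (1 - ⟪x, y⟫) := mul_nonneg hb.le (by linarith)
              linarith) hsep
      refine this.trans_eq ?_
      congr 1
      field_simp
      ring)
    (by
      intro x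
      simp only [hM _ ha, sub_self, inner_zero_right, abs_zero]
      intro x hx
      have := hyδ x hx
      exact mul_nonneg ha.le (by linarith))
  refine ⟨P, hPT, hPc, ?_⟩
  intro z hz
  obtain ⟨p, hp, hpz⟩ := hPcov z hz
  refine ⟨p, hp, hT hz, ?_⟩
  have hpT := hPT p hp
  rw [hM _ ha] at hpz
  have hexp : Real.exp (-α) ≤ 1 - α / 2 := by
    have g1 := Real.add_one_le_exp α
    have g2 : Real.exp α * Real.exp (-α) = 1 := by
      rw [← Real.exp_add]; simp
    have g3 := Real.exp_pos (-α)
    have g4 : (α + 1) * Real.exp (-α) ≤ 1 := by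
      exact (mul_le_mul_of_nonneg_right g1 g3.le).trans_eq g2
    have g5 : (1 : ℝ) ≤ (α + 1) * (1 - α / 2) := by nlinarith
    exact le_of_mul_le_mul_left (g4.trans g5) (by linarith)
  have key : ∀ w ∈ T, ∀ x ∈ S, |⟪x, z - p⟫| ≤ α / 2 * (1 - ⟪x, w⟫) := by
    intro w hw x hx
    refine (hpz x hx).trans ?_
    have := hcmp w hw y hy x hx
    calc α / (2 * L) * (1 - ⟪x, y⟫) ≤ α / (2 * L) * (L * (1 - ⟪x, w⟫)) := by gcongr
      _ = _ := by field_simp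
  have hnn : ∀ w ∈ T, ∀ x ∈ S, 0 ≤ 1 - ⟪x, w⟫ := by
    intro w hw x hx
    have := interior_subset (hT hw) x hx
    linarith
  apply dist_le_of_compare hα.le (interior_subset (hT hpT)) (interior_subset (hT hz))
  · intro x hx
    refine (mul_le_mul_of_nonneg_right hexp (hnn p hpT x hx)).trans ?_
    have h := (abs_le.1 (key p hpT x hx)).2
    rw [inner_sub_right] at h
    linarith
  · intro x hx
    refine (mul_le_mul_of_nonneg_right hexp (hnn z hz x hx)).trans ?_
    have h := (abs_le.1 (key z hz x hx)).1
    rw [inner_sub_right] at h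
    linarith

/-- Covering stability under polarity and Hilbert expansion. -/
theorem hilbert_polar_expansion_cover :
    ∃ c : ℝ, 1 ≤ c ∧ ∀ d : ℕ, 2 ≤ d →
      ∀ G K : Set (Euc d), IsConvexBody G → IsConvexBody K →
        (0 : Euc d) ∈ interior G → G ⊆ interior K →
        ∀ α : ℝ, 0 < α → α ≤ 1 → ∀ U : Set (Euc d), U ⊆ polarSet K →
          (hilbertCov (polarSet (hilbertExpand K G α)) U α : ℝ) ≤
            c ^ d * (hilbertCov (polarSet G) U α : ℝ) := by
  refine ⟨1 + 48 * Real.exp 12 ^ 2, by nlinarith [sq_nonneg (Real.exp 12)], ?_⟩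
  intro d _ G K hG hK h0 hGK α hα hα1 U hU
  classical
  set S := hilbertExpand K G α with hSdef
  have hGS : G ⊆ S := by
    intro g hg
    refine ⟨hGK hg, ?_⟩
    by_cases hb : BddBelow (hilbertDist K g '' G)
    · refine (csInf_le hb ⟨g, hg, rfl⟩).trans ?_
      simp [hilbertDist, hα.le]
    · rw [Real.sInf_of_not_bddBelow hb]; exact hα.le
  have hpol : polarSet S ⊆ polarSet G := polar_anti hGS
  have hSK : S ⊆ interior K := fun x hx => hx.1
  obtain ⟨R, hR, hKR⟩ := hK.1.isBounded.exists_pos_norm_le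
  have hSR : ∀ x ∈ S, ‖x‖ ≤ R := fun x hx => hKR x (interior_subset (hSK hx))
  obtain ⟨ρ, hρ, hGρ⟩ := Metric.nhds_basis_closedBall.mem_iff.1 (mem_interior_iff_mem_nhds.1 h0)
  by_cases hne : {m : ℕ | ∃ x : Fin m → Euc d, (∀ i, x i ∈ interior (polarSet G)) ∧
    U ⊆ ⋃ i, hilbertBall (polarSet G) (x i) α}.Nonempty
  swap
  · have hemp : {m : ℕ | ∃ x : Fin m → Euc d, (∀ i, x i ∈ interior (polarSet S)) ∧
      U ⊆ ⋃ i, hilbertBall (polarSet S) (x i) α} = ∅ := by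
      rw [Set.eq_empty_iff_forall_notMem]
      rintro m ⟨x, hx, hxU⟩
      exact hne ⟨m, x, fun i => interior_mono hpol (hx i),
        hxU.trans (iUnion_mono fun i => ball_mono hpol (hx i))⟩
    have : hilbertCov (polarSet S) U α = 0 := by
      unfold hilbertCov; rw [hemp]; exact Nat.sInf_empty
    rw [this]; simp; positivity
  change (_ : ℝ) ≤ _ * ((sInf _ : ℕ) : ℝ)
  set m := sInf {m : ℕ | ∃ x : Fin m → Euc d, (∀ i, x i ∈ interior (polarSet G)) ∧
    U ⊆ ⋃ i, hilbertBall (polarSet G) (x i) α} with hm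
  have hmem : ∃ x : Fin m → Euc d, (∀ i, x i ∈ interior (polarSet G)) ∧
    U ⊆ ⋃ i, hilbertBall (polarSet G) (x i) α := Nat.sInf_mem hne
  clear_value m
  obtain ⟨c, hc, hcU⟩ := hmem
  have hnear : ∀ x ∈ S, ∃ g ∈ G, ∀ y ∈ polarSet K,
      1 - ⟪x, y⟫ ≤ Real.exp (4 * α) * (1 - ⟪g, y⟫) ∧
      1 - ⟪g, y⟫ ≤ Real.exp (4 * α) * (1 - ⟪x, y⟫) := by
    intro x hx
    have hGne : (hilbertDist K x '' G).Nonempty := ⟨_, 0, interior_subset h0, rfl⟩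
    obtain ⟨_, ⟨g, hg, rfl⟩, hlt⟩ := exists_lt_of_csInf_lt hGne
      (show sInf (hilbertDist K x '' G) < 2 * α by linarith [hx.2])
    refine ⟨g, hg, fun y hy => ?_⟩
    have := compare_of_dist (hSK hx) (hGK hg) hlt.le hy
    rwa [← mul_assoc, show (2 : ℝ) * 2 = 4 by norm_num] at this
  have hloc : ∀ i, ∃ P : Finset (Euc d), (∀ z ∈ P, z ∈ interior (polarSet S)) ∧
      (P.card : ℝ) ≤ (1 + 48 * Real.exp 12 ^ 2) ^ d ∧
      ∀ z ∈ U ∩ hilbertBall (polarSet G) (c i) α, ∃ p ∈ P, z ∈ hilbertBall (polarSet S) p α := by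
    intro i
    have hT : U ∩ hilbertBall (polarSet G) (c i) α ⊆ interior (polarSet S) := by
      rintro y ⟨hyU, hyG, -⟩
      obtain ⟨δ, hδ, hyδ⟩ := delta_of_interior hyG
      refine interior_of_delta hR hSR (δ := δ / Real.exp (4 * α)) (by positivity) ?_
      intro x hx
      obtain ⟨g, hg, hgy⟩ := hnear x hx
      rw [div_le_iff₀ (Real.exp_pos _), mul_comm]
      exact (hyδ g hg).trans (hgy y (hU hyU)).2
    have hnn : ∀ w ∈ polarSet K, ∀ x ∈ S, 0 ≤ 1 - ⟪x, w⟫ := by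
      intro w hw x hx
      have := hw x (interior_subset (hSK hx))
      linarith
    have hcmp : ∀ y ∈ U ∩ hilbertBall (polarSet G) (c i) α,
        ∀ z ∈ U ∩ hilbertBall (polarSet G) (c i) α, ∀ x ∈ S,
        1 - ⟪x, z⟫ ≤ Real.exp (12 * α) * (1 - ⟪x, y⟫) := by
      rintro y ⟨hyU, hyG, hyd⟩ z ⟨hzU, hzG, hzd⟩ x hx
      obtain ⟨g, hg, hgy⟩ := hnear x hx
      have hw : ∀ k ∈ polarSet G, ⟪k, g⟫ ≤ 1 := fun k hk => by
        rw [real_inner_comm]; exact hk g hg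
      have e1 := (compare_of_dist (hc i) hzG hzd hw).2
      have e2 := (compare_of_dist (hc i) hyG hyd hw).1
      rw [real_inner_comm g z, real_inner_comm g (c i)] at e1
      rw [real_inner_comm g y, real_inner_comm g (c i)] at e2
      have e3 := (hgy z (hU hzU)).1
      have e4 := (hgy y (hU hyU)).2
      calc 1 - ⟪x, z⟫ ≤ Real.exp (4 * α) * (Real.exp (2 * α) * (Real.exp (2 * α) *
            (Real.exp (4 * α) * (1 - ⟪x, y⟫)))) := by
            refine e3.trans ?_
            gcongr
            refine e1.trans ?_
            gcongr
            refine e2.trans ?_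
            gcongr
        _ = Real.exp (12 * α) * (1 - ⟪x, y⟫) := by
            simp only [← mul_assoc, ← Real.exp_add]
            ring_nf
    obtain ⟨P, h1, h2, h3⟩ := local_cover hR hSR hρ (hGρ.trans hGS) (L := Real.exp 12)
      (Real.one_le_exp (by norm_num)) hα hα1 hT
      (by
        intro y hy z hz x hx
        refine (hcmp y hy z hz x hx).trans ?_
        refine mul_le_mul_of_nonneg_right (Real.exp_le_exp.2 (by linarith)) (hnn y (hU hy.1) x hx))
      (by
        intro y hy z hz x hx
        refine (hcmp y hy z hz x hx).trans ?_
        refine mul_le_mul_of_nonneg_right ?_ (hnn y (hU hy.1) x hx)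
        have g1 := Real.add_one_le_exp (-(12 * α))
        have g2 : Real.exp (12 * α) * Real.exp (-(12 * α)) = 1 := by
          rw [← Real.exp_add]; simp
        have g3 : Real.exp (12 * α) ≤ Real.exp 12 := Real.exp_le_exp.2 (by linarith)
        have g4 := Real.exp_pos (12 * α)
        nlinarith [mul_le_mul_of_nonneg_left g1 g4.le, mul_le_mul_of_nonneg_left g3 hα.le])
    exact ⟨P, fun z hz => hT (h1 z hz), h2, h3⟩
  choose P hPi hPc hPcov using hloc
  let Q := Finset.univ.biUnion P
  have hQle : hilbertCov (polarSet S) U α ≤ Q.card := by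
    apply Nat.sInf_le
    refine ⟨fun j => (Q.equivFin.symm j : Euc d), ?_, ?_⟩
    · intro j
      obtain ⟨i, -, hi⟩ := Finset.mem_biUnion.1 (Q.equivFin.symm j).2
      exact hPi i _ hi
    · intro z hz
      obtain ⟨i, hi⟩ := mem_iUnion.1 (hcU hz)
      obtain ⟨p, hp, hpz⟩ := hPcov i z ⟨hz, hi⟩
      have hpQ : p ∈ Q := Finset.mem_biUnion.2 ⟨i, Finset.mem_univ _, hp⟩
      refine mem_iUnion.2 ⟨Q.equivFin ⟨p, hpQ⟩, ?_⟩
      simpa using hpz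
  have hcard : (Q.card : ℝ) ≤ ∑ i, ((P i).card : ℝ) := by
    exact_mod_cast Finset.card_biUnion_le
  calc (hilbertCov (polarSet S) U α : ℝ) ≤ Q.card := by exact_mod_cast hQle
    _ ≤ ∑ i, ((P i).card : ℝ) := hcard
    _ ≤ ∑ _i : Fin m, (1 + 48 * Real.exp 12 ^ 2) ^ d := Finset.sum_le_sum fun i _ => hPc i
    _ = (1 + 48 * Real.exp 12 ^ 2) ^ d * (m : ℝ) := by
      rw [Finset.sum_const, Finset.card_univ, Fintype.card_fin, nsmul_eq_mul, mul_comm]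
end
end
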